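/- arXiv:2201.05360 — 8 statements merged into one kernel-verified Lean document; each statement's English description precedes it below -/
import Mathlib

section
/- Assume (A). Let u ∈ 𝒰_τ be such that x ↦ g(x,u(x)) is integrable. Let s ≤ 0 and let S ⊆ Ω be measurable with meas(S) = τ, such that ṽ is integrable on S and Ω_{<s} ⊆ S ⊆ Ω_{≤s}. Then ∫_Ω (g(x,u(x)) − g(x,0)) dx ≥ ∫_S ṽ(x) dx. Moreover, this inequality holds with equality only if all of the following are satisfied: (i) g(x,u(x)) − g(x,0) = ṽ(x) for almost all x ∈ supp u; (ii) up to sets of measure zero, Ω_{<s} ⊆ supp u ⊆ Ω_{≤s}; (iii) s = 0 or meas(supp u) = τ. -/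
open MeasureTheory Set Filter Topology ENNReal NNReal

noncomputable section

variable {d : ℕ}

/-- The Lebesgue measure on `ℝ^d` restricted to `Ω`. -/
def mOmega (Ω : Set (Fin d → ℝ)) : Measure (Fin d → ℝ) := volume.restrict Ω

/-- `|t|₀ = 1` if `t ≠ 0`, and `0` if `t = 0`. -/
def zeroInd (t : ℝ) : ℝ := if t = 0 then 0 else 1

/-- A Carathéodory function: measurable in `x` for every `u`, continuous in `u` for a.e. `x`. -/
def CaratheodoryFun (μ : Measure (Fin d → ℝ)) (h : (Fin d → ℝ) → ℝ → ℝ) : Prop :=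
  (∀ u : ℝ, Measurable fun x => h x u) ∧ ∀ᵐ x ∂μ, Continuous fun u => h x u

/-- A normal integrand with values in `ℝ ∪ {+∞}` (modeled inside `EReal`):
the pointwise supremum of countably many Carathéodory functions. -/
def NormalIntegrand (μ : Measure (Fin d → ℝ)) (g : (Fin d → ℝ) → ℝ → EReal) : Prop :=
  ∃ gn : ℕ → (Fin d → ℝ) → ℝ → ℝ,
    (∀ n, CaratheodoryFun μ (gn n)) ∧
      ∀ᵐ x ∂μ, ∀ u : ℝ, g x u = ⨆ n, ((gn n x u : ℝ) : EReal)

/-- An `EReal`-valued function is a.e. real-valued and integrable. -/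
def IntegrableE (μ : Measure (Fin d → ℝ)) (h : (Fin d → ℝ) → EReal) : Prop :=
  (∀ᵐ x ∂μ, h x ≠ ⊤ ∧ h x ≠ ⊥) ∧ Integrable (fun x => (h x).toReal) μ

/-- The integral of an (a.e. real-valued) `EReal`-valued function. -/
def intE (μ : Measure (Fin d → ℝ)) (h : (Fin d → ℝ) → EReal) : ℝ :=
  ∫ x, (h x).toReal ∂μ

/-- `ṽ(x) = inf_{v ∈ ℝ} g(x,v) − g(x,0)`. -/
def tildeV (g : (Fin d → ℝ) → ℝ → EReal) (x : Fin d → ℝ) : EReal :=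
  (⨅ v : ℝ, g x v) - g x 0

/-- The support of `u` inside `Ω`. -/
def suppIn (Ω : Set (Fin d → ℝ)) (u : (Fin d → ℝ) → ℝ) : Set (Fin d → ℝ) :=
  {x ∈ Ω | u x ≠ 0}

/-- `Ω_{<s} = {x ∈ Ω : ṽ(x) < s}`. -/
def OmLt (Ω : Set (Fin d → ℝ)) (g : (Fin d → ℝ) → ℝ → EReal) (s : ℝ) : Set (Fin d → ℝ) :=
  {x ∈ Ω | tildeV g x < (s : EReal)}

/-- `Ω_{≤s} = {x ∈ Ω : ṽ(x) ≤ s}`. -/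
def OmLe (Ω : Set (Fin d → ℝ)) (g : (Fin d → ℝ) → ℝ → EReal) (s : ℝ) : Set (Fin d → ℝ) :=
  {x ∈ Ω | tildeV g x ≤ (s : EReal)}

/-- Assumption (A): `g` is a normal integrand, `g(·,0)` is integrable, `τ ∈ (0, meas Ω)`. -/
structure AssumptionA (Ω : Set (Fin d → ℝ)) (g : (Fin d → ℝ) → ℝ → EReal) (τ : ℝ) : Prop where
  meas_Omega : MeasurableSet Ω
  normal : NormalIntegrand (mOmega Ω) g
  int_g0 : IntegrableE (mOmega Ω) fun x => g x 0
  tau_pos : 0 < τ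
  tau_lt : ENNReal.ofReal τ < volume Ω

/-- Feasible point of problem (P): measurable, `g(·,u)` integrable, `‖u‖₀ ≤ τ`. -/
def FeasibleP (Ω : Set (Fin d → ℝ)) (g : (Fin d → ℝ) → ℝ → EReal) (τ : ℝ)
    (u : (Fin d → ℝ) → ℝ) : Prop :=
  Measurable u ∧ IntegrableE (mOmega Ω) (fun x => g x (u x)) ∧
    volume (suppIn Ω u) ≤ ENNReal.ofReal τ

/-- `u` solves problem (P). -/
def SolvesP (Ω : Set (Fin d → ℝ)) (g : (Fin d → ℝ) → ℝ → EReal) (τ : ℝ)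
    (u : (Fin d → ℝ) → ℝ) : Prop :=
  FeasibleP Ω g τ u ∧ ∀ v, FeasibleP Ω g τ v →
    intE (mOmega Ω) (fun x => g x (u x)) ≤ intE (mOmega Ω) (fun x => g x (v x))

/-- The data from the characterization of solutions (Theorem `lem_char_sol_tau`):
`s ≤ 0` and a measurable `A ⊆ Ω` of measure `τ` with
`Ω_{<s} ⊆ supp u ⊆ A ⊆ Ω_{≤s}` up to null sets, `ṽ` integrable on `A`,
and `g(x,u(x)) − g(x,0) = ṽ(x)` a.e. on `A`. -/
structure CharData (Ω : Set (Fin d → ℝ)) (g : (Fin d → ℝ) → ℝ → EReal) (τ : ℝ)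
    (u : (Fin d → ℝ) → ℝ) (s : ℝ) (A : Set (Fin d → ℝ)) : Prop where
  s_nonpos : s ≤ 0
  A_meas : MeasurableSet A
  A_subset : A ⊆ Ω
  A_vol : volume A = ENNReal.ofReal τ
  lt_subset_supp : volume (OmLt Ω g s \ suppIn Ω u) = 0
  supp_subset_A : volume (suppIn Ω u \ A) = 0
  A_subset_le : volume (A \ OmLe Ω g s) = 0
  tv_int : IntegrableE ((mOmega Ω).restrict A) (tildeV g)
  eq_ae : ∀ᵐ x ∂(mOmega Ω).restrict A, g x (u x) - g x 0 = tildeV g x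

/-!
The level `s` is a Lagrange multiplier for the constraint `meas (supp u) ≤ τ`. With `A = supp u` and
`w(x) = g(x,u(x)) - g(x,0)`, which vanishes off `A`,
`∫_Ω w - ∫_S ṽ = ∫_Ω (1_A (w - s) + 1_S (s - ṽ)) + (-s) (meas S - meas A)`.
The integrand is `w - ṽ` on `A ∩ S`, `w - s` on `A \ S`, where `w ≥ ṽ ≥ s`, and `s - ṽ` on `S \ A`.
Hence both terms on the right are nonnegative, and equality holds iff both vanish.
-/

section Sublevel

variable {α β : Type*} [MeasurableSpace α] {μ : Measure α}

/-- `S` is a sublevel set of `v` at level `s`, up to null sets: `{v < s} ⊆ S ⊆ {v ≤ s}`. Any part of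
the level set `{v = s}` may be included. -/
def IsAESublevel [LT β] [LE β] (μ : Measure α) (v : α → β) (s : β) (S : Set α) : Prop :=
  (∀ᵐ x ∂μ, v x < s → x ∈ S) ∧ ∀ᵐ x ∂μ, x ∈ S → v x ≤ s

theorem isAESublevel_restrict_iff [LT β] [LE β] {Ω S : Set α} {v : α → β} {s : β}
    (hΩ : NullMeasurableSet Ω μ) (hS : S ⊆ Ω) :
    IsAESublevel (μ.restrict Ω) v s S ↔
      μ ({x ∈ Ω | v x < s} \ S) = 0 ∧ μ (S \ {x ∈ Ω | v x ≤ s}) = 0 := by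
  rw [IsAESublevel, ae_restrict_iff'₀ hΩ, ae_restrict_iff'₀ hΩ, ← ae_le_set, ← ae_le_set]
  refine and_congr (eventually_congr (.of_forall fun x => ?_))
    (eventually_congr (.of_forall fun x => ?_))
  · exact and_imp.symm
  · exact ⟨fun h hxS => ⟨hS hxS, h (hS hxS) hxS⟩, fun h _ hxS => (h hxS).2⟩

theorem isAESublevel_coe_ereal_iff {φ : α → EReal} {v : α → ℝ} {s : ℝ} {S : Set α}
    (hφv : ∀ᵐ x ∂μ, φ x = v x) :
    IsAESublevel μ φ s S ↔ IsAESublevel μ v s S := by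
  refine and_congr (eventually_congr ?_) (eventually_congr ?_)
  · filter_upwards [hφv] with x hx
    rw [hx, EReal.coe_lt_coe_iff]
  · filter_upwards [hφv] with x hx
    rw [hx, EReal.coe_le_coe_iff]

end Sublevel

section Bathtub

variable {α : Type*} {A S : Set α} {v w : α → ℝ} {s : ℝ}

/-- The pointwise excess of `w` on `A` over `v` on `S`, both measured relative to the level `s`. It
is the integrand whose sign yields the bathtub principle. -/
def bathtubGap (A S : Set α) (v w : α → ℝ) (s : ℝ) (x : α) : ℝ :=
  A.indicator (fun x => w x - s) x + S.indicator (fun x => s - v x) x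

theorem bathtubGap_nonneg {x : α} (hvw : x ∈ A → v x ≤ w x) (hlt : v x < s → x ∈ S)
    (hle : x ∈ S → v x ≤ s) : 0 ≤ bathtubGap A S v w s x := by
  by_cases hxA : x ∈ A <;> by_cases hxS : x ∈ S <;> simp only [bathtubGap, indicator, hxA, hxS] <;>
    grind

theorem bathtubGap_eq_zero_iff {x : α} (hvw : x ∈ A → v x ≤ w x) (hlt : v x < s → x ∈ S)
    (hle : x ∈ S → v x ≤ s) :
    bathtubGap A S v w s x = 0 ↔
      (x ∈ A → w x = v x) ∧ (v x < s → x ∈ A) ∧ (x ∈ A → v x ≤ s) := by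
  by_cases hxA : x ∈ A <;> by_cases hxS : x ∈ S <;> simp only [bathtubGap, indicator, hxA, hxS] <;>
    grind

variable [MeasurableSpace α] {μ : Measure α}

theorem integrable_bathtubGap (hA : NullMeasurableSet A μ) (hS : NullMeasurableSet S μ)
    (hA_fin : μ A ≠ ∞) (hS_fin : μ S ≠ ∞) (hw : IntegrableOn w A μ) (hv : IntegrableOn v S μ) :
    Integrable (bathtubGap A S v w s) μ :=
  ((hw.sub (integrableOn_const hA_fin)).integrable_indicator₀ hA).add
    (((integrableOn_const hS_fin).sub hv).integrable_indicator₀ hS)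

theorem integral_bathtubGap (hA : NullMeasurableSet A μ) (hS : NullMeasurableSet S μ)
    (hA_fin : μ A ≠ ∞) (hS_fin : μ S ≠ ∞) (hw : IntegrableOn w A μ) (hv : IntegrableOn v S μ) :
    ∫ x, bathtubGap A S v w s x ∂μ =
      (∫ x in A, w x ∂μ) - (∫ x in S, v x ∂μ) + s * (μ.real S - μ.real A) := by
  have hsA : IntegrableOn (fun _ => s) A μ := integrableOn_const hA_fin
  have hsS : IntegrableOn (fun _ => s) S μ := integrableOn_const hS_fin
  have hwA : Integrable (A.indicator fun x => w x - s) μ :=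
    (hw.sub hsA).integrable_indicator₀ hA
  have hvS : Integrable (S.indicator fun x => s - v x) μ :=
    (hsS.sub hv).integrable_indicator₀ hS
  simp only [bathtubGap]
  rw [integral_add hwA hvS, integral_indicator₀ hA, integral_indicator₀ hS, integral_sub hw hsA,
    integral_sub hsS hv, setIntegral_const, setIntegral_const, smul_eq_mul, smul_eq_mul]
  ring

theorem ae_bathtubGap_nonneg (hvw : ∀ᵐ x ∂μ, x ∈ A → v x ≤ w x) (hSv : IsAESublevel μ v s S) :
    0 ≤ᵐ[μ] bathtubGap A S v w s := by
  filter_upwards [hvw, hSv.1, hSv.2] with x using bathtubGap_nonneg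

theorem ae_bathtubGap_eq_zero_iff (hvw : ∀ᵐ x ∂μ, x ∈ A → v x ≤ w x)
    (hSv : IsAESublevel μ v s S) :
    bathtubGap A S v w s =ᵐ[μ] 0 ↔
      (∀ᵐ x ∂μ, x ∈ A → w x = v x) ∧ IsAESublevel μ v s A := by
  rw [IsAESublevel, ← eventually_and, ← eventually_and]
  refine eventually_congr ?_
  filter_upwards [hvw, hSv.1, hSv.2] with x using bathtubGap_eq_zero_iff

theorem mul_measureReal_sub_nonpos (hs : s ≤ 0) (hAS : μ A ≤ μ S) (hS_fin : μ S ≠ ∞) :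
    s * (μ.real S - μ.real A) ≤ 0 :=
  mul_nonpos_of_nonpos_of_nonneg hs (sub_nonneg.2 (ENNReal.toReal_mono hS_fin hAS))

theorem setIntegral_le_of_isAESublevel (hs : s ≤ 0) (hA : NullMeasurableSet A μ)
    (hS : NullMeasurableSet S μ) (hAS : μ A ≤ μ S) (hS_fin : μ S ≠ ∞) (hw : IntegrableOn w A μ)
    (hv : IntegrableOn v S μ) (hvw : ∀ᵐ x ∂μ, x ∈ A → v x ≤ w x) (hSv : IsAESublevel μ v s S) :
    ∫ x in S, v x ∂μ ≤ ∫ x in A, w x ∂μ := by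
  have hgap := integral_nonneg_of_ae (ae_bathtubGap_nonneg hvw hSv)
  have hmass := mul_measureReal_sub_nonpos hs hAS hS_fin
  rw [integral_bathtubGap hA hS (ne_top_of_le_ne_top hS_fin hAS) hS_fin hw hv] at hgap
  linarith

theorem setIntegral_eq_iff_of_isAESublevel (hs : s ≤ 0) (hA : NullMeasurableSet A μ)
    (hS : NullMeasurableSet S μ) (hAS : μ A ≤ μ S) (hS_fin : μ S ≠ ∞) (hw : IntegrableOn w A μ)
    (hv : IntegrableOn v S μ) (hvw : ∀ᵐ x ∂μ, x ∈ A → v x ≤ w x) (hSv : IsAESublevel μ v s S) :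
    ∫ x in A, w x ∂μ = ∫ x in S, v x ∂μ ↔
      (∀ᵐ x ∂μ, x ∈ A → w x = v x) ∧ IsAESublevel μ v s A ∧ (s = 0 ∨ μ A = μ S) := by
  have hA_fin : μ A ≠ ∞ := ne_top_of_le_ne_top hS_fin hAS
  have hgap_nonneg := ae_bathtubGap_nonneg hvw hSv
  have hmass := mul_measureReal_sub_nonpos hs hAS hS_fin
  have hmass_zero : s * (μ.real S - μ.real A) = 0 ↔ s = 0 ∨ μ A = μ S := by
    rw [mul_eq_zero, sub_eq_zero, measureReal_eq_measureReal_iff hS_fin hA_fin, eq_comm (a := μ S)]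
  have hsplit : ∫ x in A, w x ∂μ = ∫ x in S, v x ∂μ ↔
      ∫ x, bathtubGap A S v w s x ∂μ = 0 ∧ s * (μ.real S - μ.real A) = 0 := by
    have hgap := integral_nonneg_of_ae hgap_nonneg
    have hgap_eq := integral_bathtubGap (s := s) hA hS hA_fin hS_fin hw hv
    constructor
    · intro h
      constructor <;> linarith
    · rintro ⟨h, h'⟩
      linarith
  rw [hsplit, hmass_zero, integral_eq_zero_iff_of_nonneg_ae hgap_nonneg
    (integrable_bathtubGap hA hS hA_fin hS_fin hw hv), ae_bathtubGap_eq_zero_iff hvw hSv, and_assoc]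

end Bathtub

section ExtendedReal

variable {α : Type*} [MeasurableSpace α] {μ : Measure α}

/-- An extended-real function that is a.e. finite with integrable real part: the notion
`IntegrableE` on an arbitrary measure space. -/
def AEFiniteIntegrable (μ : Measure α) (f : α → EReal) : Prop :=
  (∀ᵐ x ∂μ, f x ≠ ⊤ ∧ f x ≠ ⊥) ∧ Integrable (fun x => (f x).toReal) μ

theorem AEFiniteIntegrable.ae_eq_coe_toReal {f : α → EReal} (hf : AEFiniteIntegrable μ f) :
    ∀ᵐ x ∂μ, f x = (f x).toReal := by
  filter_upwards [hf.1] with x hx using (EReal.coe_toReal hx.1 hx.2).symm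

theorem AEFiniteIntegrable.sub {f h : α → EReal} (hf : AEFiniteIntegrable μ f)
    (hh : AEFiniteIntegrable μ h) : AEFiniteIntegrable μ (fun x => f x - h x) := by
  have hsub : ∀ᵐ x ∂μ, f x - h x = (((f x).toReal - (h x).toReal : ℝ) : EReal) := by
    filter_upwards [hf.ae_eq_coe_toReal, hh.ae_eq_coe_toReal] with x hfx hhx
    rw [EReal.coe_sub, ← hfx, ← hhx]
  constructor
  · filter_upwards [hsub] with x hx
    rw [hx]
    exact ⟨EReal.coe_ne_top _, EReal.coe_ne_bot _⟩
  · refine (hf.2.sub hh.2).congr ?_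
    filter_upwards [hsub] with x hx
    rw [hx, EReal.toReal_coe, Pi.sub_apply]

theorem ae_eq_coe_toReal_of_lt_imp_mem {φ : α → EReal} {S : Set α} {s : ℝ}
    (htop : ∀ᵐ x ∂μ, φ x ≠ ⊤) (hbot : ∀ᵐ x ∂μ, x ∈ S → φ x ≠ ⊥)
    (hlt : ∀ᵐ x ∂μ, φ x < s → x ∈ S) : ∀ᵐ x ∂μ, φ x = (φ x).toReal := by
  filter_upwards [htop, hbot, hlt] with x hxtop hxbot hxlt
  refine (EReal.coe_toReal hxtop ?_).symm
  by_cases hxS : x ∈ S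
  · exact hxbot hxS
  · exact ne_bot_of_le_ne_bot (EReal.coe_ne_bot s) (not_lt.1 (mt hxlt hxS))

theorem setIntegral_toReal_le_and_eq_iff {A S : Set α} {f φ : α → EReal} {s : ℝ} (hs : s ≤ 0)
    (hA : NullMeasurableSet A μ) (hS : NullMeasurableSet S μ) (hAS : μ A ≤ μ S) (hS_fin : μ S ≠ ∞)
    (hf : AEFiniteIntegrable μ f) (hφ : AEFiniteIntegrable (μ.restrict S) φ)
    (hf_zero : ∀ᵐ x ∂μ, x ∉ A → f x = 0) (hφf : ∀ᵐ x ∂μ, φ x ≤ f x)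
    (hSφ : IsAESublevel μ φ s S) :
    ∫ x in S, (φ x).toReal ∂μ ≤ ∫ x, (f x).toReal ∂μ ∧
    (∫ x, (f x).toReal ∂μ = ∫ x in S, (φ x).toReal ∂μ ↔
      (∀ᵐ x ∂μ, x ∈ A → f x = φ x) ∧ IsAESublevel μ φ s A ∧ (s = 0 ∨ μ A = μ S)) := by
  have hf_coe := hf.ae_eq_coe_toReal
  have hφ_top : ∀ᵐ x ∂μ, φ x ≠ ⊤ := by
    filter_upwards [hf.1, hφf] with x hfx hle using ne_top_of_le_ne_top hfx.1 hle
  have hφ_bot : ∀ᵐ x ∂μ, x ∈ S → φ x ≠ ⊥ := by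
    filter_upwards [(ae_restrict_iff'₀ hS).1 hφ.1] with x hx hxS using (hx hxS).2
  have hφ_coe := ae_eq_coe_toReal_of_lt_imp_mem hφ_top hφ_bot hSφ.1
  have hf_supp : ∫ x in A, (f x).toReal ∂μ = ∫ x, (f x).toReal ∂μ := by
    refine setIntegral_eq_integral_of_ae_compl_eq_zero ?_
    filter_upwards [hf_zero] with x hx hxA
    rw [hx hxA, EReal.toReal_zero]
  have hφf_real : ∀ᵐ x ∂μ, x ∈ A → (φ x).toReal ≤ (f x).toReal := by
    filter_upwards [hf_coe, hφ_coe, hφf] with x hfx hφx hle _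
    rwa [hfx, hφx, EReal.coe_le_coe_iff] at hle
  have heq_real : (∀ᵐ x ∂μ, x ∈ A → f x = φ x) ↔
      ∀ᵐ x ∂μ, x ∈ A → (f x).toReal = (φ x).toReal := by
    refine eventually_congr ?_
    filter_upwards [hf_coe, hφ_coe] with x hfx hφx
    rw [← EReal.coe_eq_coe_iff, ← hfx, ← hφx]
  rw [isAESublevel_coe_ereal_iff hφ_coe] at hSφ ⊢
  rw [heq_real, ← hf_supp]
  exact ⟨setIntegral_le_of_isAESublevel hs hA hS hAS hS_fin hf.2.integrableOn hφ.2 hφf_real hSφ,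
    setIntegral_eq_iff_of_isAESublevel hs hA hS hAS hS_fin hf.2.integrableOn hφ.2 hφf_real hSφ⟩

end ExtendedReal

section InfIncrement

variable {α V : Type*} [Zero V]

/-- The infimal increment `inf_v g(x,v) - g(x,0)` of an integrand: the function `ṽ` (`tildeV`) for
arbitrary argument types. -/
def infIncrement (g : α → V → EReal) (x : α) : EReal :=
  (⨅ y, g x y) - g x 0

theorem infIncrement_le (g : α → V → EReal) (x : α) (y : V) :
    infIncrement g x ≤ g x y - g x 0 :=
  EReal.sub_le_sub (iInf_le _ y) le_rfl

theorem statement1_general [MeasurableSpace α] {μ : Measure α} {Ω S : Set α} {g : α → V → EReal}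
    {u : α → V} {s : ℝ} (hΩ : NullMeasurableSet Ω μ)
    (hg0 : AEFiniteIntegrable (μ.restrict Ω) fun x => g x 0)
    (hgu : AEFiniteIntegrable (μ.restrict Ω) fun x => g x (u x))
    (hu : NullMeasurableSet {x ∈ Ω | u x ≠ 0} (μ.restrict Ω)) (hs : s ≤ 0)
    (hS : NullMeasurableSet S (μ.restrict Ω)) (huS : μ {x ∈ Ω | u x ≠ 0} ≤ μ S) (hS_fin : μ S ≠ ∞)
    (hgS : AEFiniteIntegrable ((μ.restrict Ω).restrict S) (infIncrement g))
    (hlt : {x ∈ Ω | infIncrement g x < s} ⊆ S) (hle : S ⊆ {x ∈ Ω | infIncrement g x ≤ s}) :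
    ∫ x in S, (infIncrement g x).toReal ∂μ.restrict Ω ≤
        ∫ x in Ω, (g x (u x) - g x 0).toReal ∂μ ∧
    (∫ x in Ω, (g x (u x) - g x 0).toReal ∂μ =
        ∫ x in S, (infIncrement g x).toReal ∂μ.restrict Ω ↔
      (∀ᵐ x ∂μ.restrict Ω, u x ≠ 0 → g x (u x) - g x 0 = infIncrement g x) ∧
      (μ ({x ∈ Ω | infIncrement g x < s} \ {x ∈ Ω | u x ≠ 0}) = 0 ∧
        μ ({x ∈ Ω | u x ≠ 0} \ {x ∈ Ω | infIncrement g x ≤ s}) = 0) ∧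
      (s = 0 ∨ μ {x ∈ Ω | u x ≠ 0} = μ S)) := by
  have hSΩ : S ⊆ Ω := fun x hx => (hle hx).1
  have hmemΩ : ∀ᵐ x ∂μ.restrict Ω, x ∈ Ω := ae_restrict_mem₀ hΩ
  have hzero : ∀ᵐ x ∂μ.restrict Ω, x ∉ {x ∈ Ω | u x ≠ 0} → g x (u x) - g x 0 = 0 := by
    filter_upwards [hmemΩ, hg0.1] with x hxΩ hx0 hxu
    rw [not_not.1 fun hux => hxu ⟨hxΩ, hux⟩, EReal.sub_self hx0.1 hx0.2]
  have hsupp : (∀ᵐ x ∂μ.restrict Ω, u x ≠ 0 → g x (u x) - g x 0 = infIncrement g x) ↔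
      ∀ᵐ x ∂μ.restrict Ω, x ∈ {x ∈ Ω | u x ≠ 0} → g x (u x) - g x 0 = infIncrement g x := by
    refine eventually_congr ?_
    filter_upwards [hmemΩ] with x hxΩ
    exact ⟨fun h hxu => h hxu.2, fun h hux => h ⟨hxΩ, hux⟩⟩
  have hSsub : IsAESublevel (μ.restrict Ω) (infIncrement g) s S := by
    rw [isAESublevel_restrict_iff hΩ hSΩ, sdiff_eq_empty.2 hlt, sdiff_eq_empty.2 hle, measure_empty]
    exact ⟨rfl, rfl⟩
  rw [← isAESublevel_restrict_iff hΩ (sep_subset _ _), hsupp]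
  rw [← Measure.restrict_eq_self μ hSΩ] at huS hS_fin ⊢
  rw [← Measure.restrict_eq_self μ (sep_subset Ω _)] at huS ⊢
  exact setIntegral_toReal_le_and_eq_iff hs hu hS huS hS_fin (hgu.sub hg0) hgS hzero
    (.of_forall fun x => infIncrement_le g x (u x)) hSsub

end InfIncrement

/-- Lemma `lem_basic_ineq`: under Assumption (A), if `u ∈ 𝒰_τ` with `g(·,u)`
integrable, `s ≤ 0`, and `S` is measurable with `meas S = τ`, `ṽ` integrable on `S` and
`Ω_{<s} ⊆ S ⊆ Ω_{≤s}`, then `∫_Ω (g(x,u(x)) − g(x,0)) dx ≥ ∫_S ṽ dx`, with equality only if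
(i) `g(x,u(x)) − g(x,0) = ṽ(x)` a.e. on `supp u`, (ii) `Ω_{<s} ⊆ supp u ⊆ Ω_{≤s}` up to null
sets, (iii) `s = 0` or `meas (supp u) = τ`. -/
theorem statement1 (Ω : Set (Fin d → ℝ)) (g : (Fin d → ℝ) → ℝ → EReal) (τ : ℝ)
    (hA : AssumptionA Ω g τ)
    (u : (Fin d → ℝ) → ℝ) (hu_meas : Measurable u)
    (hu_tau : volume (suppIn Ω u) ≤ ENNReal.ofReal τ)
    (hu_int : IntegrableE (mOmega Ω) fun x => g x (u x))
    (s : ℝ) (hs : s ≤ 0)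
    (S : Set (Fin d → ℝ)) (hS_meas : MeasurableSet S)
    (hS_vol : volume S = ENNReal.ofReal τ)
    (htv_int : IntegrableE ((mOmega Ω).restrict S) (tildeV g))
    (h_lt : OmLt Ω g s ⊆ S) (h_le : S ⊆ OmLe Ω g s) :
    intE ((mOmega Ω).restrict S) (tildeV g) ≤
        intE (mOmega Ω) (fun x => g x (u x) - g x 0) ∧
    (intE (mOmega Ω) (fun x => g x (u x) - g x 0) =
        intE ((mOmega Ω).restrict S) (tildeV g) →
      (∀ᵐ x ∂mOmega Ω, u x ≠ 0 → g x (u x) - g x 0 = tildeV g x) ∧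
      (volume (OmLt Ω g s \ suppIn Ω u) = 0 ∧ volume (suppIn Ω u \ OmLe Ω g s) = 0) ∧
      (s = 0 ∨ volume (suppIn Ω u) = ENNReal.ofReal τ)) := by
  rw [← hS_vol] at hu_tau ⊢
  have hsupp : NullMeasurableSet (suppIn Ω u) (mOmega Ω) :=
    (hA.meas_Omega.inter (hu_meas (measurableSet_singleton 0).compl)).nullMeasurableSet
  exact (statement1_general hA.meas_Omega.nullMeasurableSet hA.int_g0 hu_int hsupp hs
    hS_meas.nullMeasurableSet hu_tau (hS_vol ▸ ENNReal.ofReal_ne_top) htv_int h_lt h_le).imp_right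
    Iff.mp
end
end

section
/- Assume (A) for the two parameters τ and τ' with 0 < τ < τ' < meas(Ω), and suppose problem (P) has a solution u_τ for parameter τ and a solution u_{τ'} for parameter τ'. Define the value function V(σ) := inf{∫_Ω g(x,u(x)) dx : u measurable, x ↦ g(x,u(x)) integrable, ‖u‖₀ ≤ σ}. Let s ≤ 0 be a number associated to u_τ by the solution characterization, i.e., there is a measurable A ⊆ Ω with meas(A) = τ such that Ω_{<s} ⊆ supp u_τ ⊆ A ⊆ Ω_{≤s} up to null sets, ṽ is integrable on A, and g(x,u_τ(x)) − g(x,0) = ṽ(x) a.e. on A. Then 0 ≤ V(τ) − V(τ') ≤ |s| (τ' − τ). -/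
open MeasureTheory Set Filter Topology ENNReal NNReal

noncomputable section

variable {d : ℕ}

/-- The value function `V(σ)` of problem (P) with parameter `σ`. -/
def Vval (Ω : Set (Fin d → ℝ)) (g : (Fin d → ℝ) → ℝ → EReal) (σ : ℝ) : ℝ :=
  sInf {r : ℝ | ∃ u, FeasibleP Ω g σ u ∧ intE (mOmega Ω) (fun x => g x (u x)) = r}

/-! The number `|s|` is a Lagrange multiplier for the constraint `‖u‖₀ ≤ τ`. By the
characterization, `u` minimizes the penalized integrand pointwise: for a.e. `x` and every `v ∈ ℝ`,
`g(x, u(x)) + |s| 1_A(x) ≤ g(x, v) + |s| |v|₀`. Integrating this along a function `v` that is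
feasible for `σ` gives `∫ g(x, u) + |s| τ ≤ ∫ g(x, v) + |s| σ`; hence `s = -|s|` is a subgradient of
the value function at `τ`. -/

section Support

theorem zeroInd_comp {X : Type*} (v : X → ℝ) :
    (fun x => zeroInd (v x)) = (Function.support v).indicator 1 := by
  ext x
  by_cases hx : v x = 0 <;> simp [zeroInd, hx]

variable {Ω : Set (Fin d → ℝ)} {v : (Fin d → ℝ) → ℝ}

theorem mOmega_support (hv : Measurable v) :
    mOmega Ω (Function.support v) = volume (suppIn Ω v) := by
  rw [mOmega, Measure.restrict_apply (measurableSet_support hv), inter_comm]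
  rfl

theorem integrable_zeroInd (hv : Measurable v) (hfin : volume (suppIn Ω v) ≠ ⊤) :
    Integrable (fun x => zeroInd (v x)) (mOmega Ω) := by
  rw [zeroInd_comp, integrable_indicator_iff (measurableSet_support hv)]
  exact integrableOn_const (by rwa [mOmega_support hv])

theorem integral_zeroInd (hv : Measurable v) :
    ∫ x, zeroInd (v x) ∂mOmega Ω = volume.real (suppIn Ω v) := by
  rw [zeroInd_comp, integral_indicator_one (measurableSet_support hv), Measure.real,
    mOmega_support hv, Measure.real]

end Support

section Pointwise

theorem sub_eq_coe_toReal_sub {a b : EReal} (ha : a ≠ ⊤ ∧ a ≠ ⊥) (hb : b ≠ ⊤ ∧ b ≠ ⊥) :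
    a - b = ((a.toReal - b.toReal : ℝ) : EReal) := by
  rw [EReal.coe_sub, EReal.coe_toReal ha.1 ha.2, EReal.coe_toReal hb.1 hb.2]

theorem ne_top_and_ne_bot_of_sub {a b : EReal} (ha : a ≠ ⊤ ∧ a ≠ ⊥)
    (hab : a - b ≠ ⊤ ∧ a - b ≠ ⊥) : b ≠ ⊤ ∧ b ≠ ⊥ := by
  lift a to ℝ using ha
  constructor <;> rintro rfl <;> simp at hab

variable {g : (Fin d → ℝ) → ℝ → EReal} {x : Fin d → ℝ} {s t v : ℝ}

theorem tildeV_le_sub (g : (Fin d → ℝ) → ℝ → EReal) (x : Fin d → ℝ) (v : ℝ) :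
    tildeV g x ≤ g x v - g x 0 :=
  EReal.sub_le_sub (iInf_le _ v) le_rfl

theorem toReal_zero_le_of_le_tildeV (h₀ : g x 0 ≠ ⊤ ∧ g x 0 ≠ ⊥) (hv : g x v ≠ ⊤ ∧ g x v ≠ ⊥)
    (hs : s ≤ tildeV g x) : (g x 0).toReal ≤ (g x v).toReal - s * zeroInd v := by
  have hsv : s ≤ (g x v).toReal - (g x 0).toReal := by
    exact_mod_cast (hs.trans (tildeV_le_sub g x v)).trans_eq (sub_eq_coe_toReal_sub hv h₀)
  by_cases hv₀ : v = 0
  · simp [zeroInd, hv₀]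
  · simp only [zeroInd, if_neg hv₀]
    linarith

theorem toReal_sub_le_of_eq_tildeV (h₀ : g x 0 ≠ ⊤ ∧ g x 0 ≠ ⊥) (ht : g x t ≠ ⊤ ∧ g x t ≠ ⊥)
    (hv : g x v ≠ ⊤ ∧ g x v ≠ ⊥) (heq : g x t - g x 0 = tildeV g x) (hs : tildeV g x ≤ s) :
    (g x t).toReal - s ≤ (g x v).toReal - s * zeroInd v := by
  have htv := heq.trans_le (tildeV_le_sub g x v)
  have hts := heq.trans_le hs
  rw [sub_eq_coe_toReal_sub ht h₀] at htv hts
  rw [sub_eq_coe_toReal_sub hv h₀] at htv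
  norm_cast at htv hts
  by_cases hv₀ : v = 0
  · simp only [zeroInd, hv₀, if_true]
    linarith
  · simp only [zeroInd, if_neg hv₀]
    linarith

end Pointwise

namespace CharData

variable {Ω A : Set (Fin d → ℝ)} {g : (Fin d → ℝ) → ℝ → EReal} {τ s : ℝ}
  {u v : (Fin d → ℝ) → ℝ}

theorem ae_eq_zero_of_notMem (h : CharData Ω g τ u s A) (hΩ : MeasurableSet Ω) :
    ∀ᵐ x ∂mOmega Ω, x ∉ A → u x = 0 := by
  filter_upwards [ae_restrict_mem hΩ, ae_restrict_of_ae (ae_le_set.2 h.supp_subset_A)]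
    with x hxΩ hsub hxA
  by_contra hux
  exact hxA (hsub ⟨hxΩ, hux⟩)

theorem ae_tildeV_le_of_mem (h : CharData Ω g τ u s A) :
    ∀ᵐ x ∂mOmega Ω, x ∈ A → tildeV g x ≤ s := by
  filter_upwards [ae_restrict_of_ae (ae_le_set.2 h.A_subset_le)] with x hsub hxA
  exact (hsub hxA).2

theorem ae_le_tildeV_of_eq_zero (h : CharData Ω g τ u s A) (hΩ : MeasurableSet Ω) :
    ∀ᵐ x ∂mOmega Ω, u x = 0 → s ≤ tildeV g x := by
  filter_upwards [ae_restrict_mem hΩ, ae_restrict_of_ae (ae_le_set.2 h.lt_subset_supp)]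
    with x hxΩ hsub hux
  by_contra! hlt
  exact (hsub ⟨hxΩ, hlt⟩).2 hux

theorem ae_zero_ne_top_and_ne_bot (h : CharData Ω g τ u s A) (hΩ : MeasurableSet Ω)
    (hu : ∀ᵐ x ∂mOmega Ω, g x (u x) ≠ ⊤ ∧ g x (u x) ≠ ⊥) :
    ∀ᵐ x ∂mOmega Ω, g x 0 ≠ ⊤ ∧ g x 0 ≠ ⊥ := by
  filter_upwards [h.ae_eq_zero_of_notMem hΩ, hu, (ae_restrict_iff' h.A_meas).1 h.tv_int.1,
    (ae_restrict_iff' h.A_meas).1 h.eq_ae] with x hoff hux hfin heq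
  by_cases hxA : x ∈ A
  · exact ne_top_and_ne_bot_of_sub hux (by rw [heq hxA]; exact hfin hxA)
  · rwa [hoff hxA] at hux

theorem ae_toReal_sub_indicator_le (h : CharData Ω g τ u s A) (hΩ : MeasurableSet Ω)
    (hu : ∀ᵐ x ∂mOmega Ω, g x (u x) ≠ ⊤ ∧ g x (u x) ≠ ⊥)
    (hv : ∀ᵐ x ∂mOmega Ω, g x (v x) ≠ ⊤ ∧ g x (v x) ≠ ⊥) :
    ∀ᵐ x ∂mOmega Ω, (g x (u x)).toReal - s * A.indicator 1 x ≤
      (g x (v x)).toReal - s * zeroInd (v x) := by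
  filter_upwards [h.ae_zero_ne_top_and_ne_bot hΩ hu, hu, hv, h.ae_eq_zero_of_notMem hΩ,
    h.ae_tildeV_le_of_mem, h.ae_le_tildeV_of_eq_zero hΩ,
    (ae_restrict_iff' h.A_meas).1 h.eq_ae] with x h₀ hux hvx hoff hle hge heq
  by_cases hxA : x ∈ A
  · simpa [hxA] using toReal_sub_le_of_eq_tildeV h₀ hux hvx (heq hxA) (hle hxA)
  · simpa [hxA, hoff hxA] using toReal_zero_le_of_le_tildeV h₀ hvx (hge (hoff hxA))

theorem mOmega_apply (h : CharData Ω g τ u s A) : mOmega Ω A = ENNReal.ofReal τ := by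
  rw [mOmega, Measure.restrict_apply h.A_meas, inter_eq_left.2 h.A_subset, h.A_vol]

theorem integrable_indicator (h : CharData Ω g τ u s A) :
    Integrable (A.indicator (1 : (Fin d → ℝ) → ℝ)) (mOmega Ω) := by
  rw [integrable_indicator_iff h.A_meas]
  exact integrableOn_const (by simp [h.mOmega_apply])

theorem integral_indicator (h : CharData Ω g τ u s A) (hτ : 0 ≤ τ) :
    ∫ x, A.indicator (1 : (Fin d → ℝ) → ℝ) x ∂mOmega Ω = τ := by
  rw [integral_indicator_one h.A_meas, Measure.real, h.mOmega_apply, ENNReal.toReal_ofReal hτ]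

theorem intE_sub_le (h : CharData Ω g τ u s A) (hΩ : MeasurableSet Ω) (hτ : 0 ≤ τ)
    (hu : IntegrableE (mOmega Ω) fun x => g x (u x)) (hv : Measurable v)
    (hgv : IntegrableE (mOmega Ω) fun x => g x (v x)) (hfin : volume (suppIn Ω v) ≠ ⊤) :
    intE (mOmega Ω) (fun x => g x (u x)) - s * τ ≤
      intE (mOmega Ω) (fun x => g x (v x)) - s * volume.real (suppIn Ω v) := by
  have hA := h.integrable_indicator.const_mul s
  have hv₀ := (integrable_zeroInd hv hfin).const_mul s
  calc intE (mOmega Ω) (fun x => g x (u x)) - s * τ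
      = ∫ x, (g x (u x)).toReal - s * A.indicator 1 x ∂mOmega Ω := by
        rw [integral_sub hu.2 hA, integral_const_mul, h.integral_indicator hτ, intE]
    _ ≤ ∫ x, (g x (v x)).toReal - s * zeroInd (v x) ∂mOmega Ω :=
        integral_mono_ae (hu.2.sub hA) (hgv.2.sub hv₀)
          (h.ae_toReal_sub_indicator_le hΩ hu.1 hgv.1)
    _ = intE (mOmega Ω) (fun x => g x (v x)) - s * volume.real (suppIn Ω v) := by
        rw [integral_sub hgv.2 hv₀, integral_const_mul, integral_zeroInd hv, intE]

end CharData

section ValueFunction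

variable {Ω A : Set (Fin d → ℝ)} {g : (Fin d → ℝ) → ℝ → EReal} {τ τ' σ s : ℝ}
  {u : (Fin d → ℝ) → ℝ}

/-- The objective values of problem (P) with parameter `σ`, whose infimum is `Vval Ω g σ`. -/
def feasibleValues (Ω : Set (Fin d → ℝ)) (g : (Fin d → ℝ) → ℝ → EReal) (σ : ℝ) : Set ℝ :=
  {r | ∃ u, FeasibleP Ω g σ u ∧ intE (mOmega Ω) (fun x => g x (u x)) = r}

theorem feasibleValues_mono : Monotone (feasibleValues Ω g) := by
  rintro σ σ' hσ _ ⟨u, ⟨hum, hgu, huσ⟩, rfl⟩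
  exact ⟨u, ⟨hum, hgu, huσ.trans (ENNReal.ofReal_le_ofReal hσ)⟩, rfl⟩

theorem CharData.mem_lowerBounds_feasibleValues (h : CharData Ω g τ u s A)
    (hΩ : MeasurableSet Ω) (hτ : 0 ≤ τ) (hσ : 0 ≤ σ)
    (hu : IntegrableE (mOmega Ω) fun x => g x (u x)) :
    intE (mOmega Ω) (fun x => g x (u x)) - |s| * (σ - τ) ∈
      lowerBounds (feasibleValues Ω g σ) := by
  rintro _ ⟨v, ⟨hv, hgv, hvσ⟩, rfl⟩
  have hpen := h.intE_sub_le hΩ hτ hu hv hgv (ne_top_of_le_ne_top ENNReal.ofReal_ne_top hvσ)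
  have hsupp : |s| * volume.real (suppIn Ω v) ≤ |s| * σ :=
    mul_le_mul_of_nonneg_left (ENNReal.toReal_le_of_le_ofReal hσ hvσ) (abs_nonneg s)
  rw [abs_of_nonpos h.s_nonpos] at hsupp ⊢
  linarith

theorem statement4_general (hΩ : MeasurableSet Ω) (hτ : 0 ≤ τ) (hττ' : τ ≤ τ')
    (hu : FeasibleP Ω g τ u) (h : CharData Ω g τ u s A) :
    0 ≤ Vval Ω g τ - Vval Ω g τ' ∧ Vval Ω g τ - Vval Ω g τ' ≤ |s| * (τ' - τ) := by
  have hsub := feasibleValues_mono (Ω := Ω) (g := g) hττ'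
  have hmem : intE (mOmega Ω) (fun x => g x (u x)) ∈ feasibleValues Ω g τ := ⟨u, hu, rfl⟩
  have hlower := h.mem_lowerBounds_feasibleValues hΩ hτ (hτ.trans hττ') hu.2.1
  have hbdd : BddBelow (feasibleValues Ω g τ') := ⟨_, hlower⟩
  have hanti : Vval Ω g τ' ≤ Vval Ω g τ := csInf_le_csInf hbdd ⟨_, hmem⟩ hsub
  have hVτ : Vval Ω g τ ≤ intE (mOmega Ω) (fun x => g x (u x)) :=
    csInf_le (hbdd.mono hsub) hmem
  have hVτ' : intE (mOmega Ω) (fun x => g x (u x)) - |s| * (τ' - τ) ≤ Vval Ω g τ' :=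
    le_csInf ⟨_, hsub hmem⟩ hlower
  constructor <;> linarith

end ValueFunction

/-- strong stability of the value function: if `0 < τ < τ' < meas Ω`,
problems (P) for `τ` and `τ'` have solutions, and `s ≤ 0` is associated with the solution
`u_τ` by the characterization, then `0 ≤ V(τ) − V(τ') ≤ |s| (τ' − τ)`. -/
theorem statement4 (Ω : Set (Fin d → ℝ)) (g : (Fin d → ℝ) → ℝ → EReal) (τ τ' : ℝ)
    (hττ' : τ < τ')
    (hA : AssumptionA Ω g τ) (hA' : AssumptionA Ω g τ')
    (utau utau' : (Fin d → ℝ) → ℝ)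
    (h_sol : SolvesP Ω g τ utau) (h_sol' : SolvesP Ω g τ' utau')
    (s : ℝ) (A : Set (Fin d → ℝ)) (h_char : CharData Ω g τ utau s A) :
    0 ≤ Vval Ω g τ - Vval Ω g τ' ∧ Vval Ω g τ - Vval Ω g τ' ≤ |s| * (τ' - τ) :=
  statement4_general hA.meas_Omega hA.tau_pos.le hττ'.le h_sol.1 h_char
end
end

section
/- Assume (A). Let u̅ be a solution of problem (P), and let s ≤ 0 be given by the solution characterization, i.e., there is a measurable A ⊆ Ω with meas(A) = τ such that Ω_{<s} ⊆ supp u̅ ⊆ A ⊆ Ω_{≤s} up to null sets, ṽ is integrable on A, and g(x,u̅(x)) − g(x,0) = ṽ(x) a.e. on A. Then s · (τ − ‖u̅‖₀) = 0. -/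
open MeasureTheory Set Filter Topology ENNReal NNReal

noncomputable section

variable {d : ℕ}

/-! Where `s < 0`, passing from `0` to `u(x)` changes `g(x, ·)` by `ṽ(x) ≤ s < 0` at almost every
`x ∈ A`, so `u(x) ≠ 0` there. Hence `supp u = A` up to a null set, and `‖u‖₀ = meas(A) = τ`. -/

section MeasureSpace

variable {X E : Type*} [MeasurableSpace X] [Zero E] {μ : Measure X} {g : X → E → EReal} {u : X → E}
  {A : Set X}

theorem ne_zero_of_sub_apply_zero_neg {φ : E → EReal} (hφ : φ 0 ≠ ⊤ ∧ φ 0 ≠ ⊥) {a : E}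
    (ha : φ a - φ 0 < 0) : a ≠ 0 := by
  rintro rfl
  exact ha.ne (EReal.sub_self hφ.1 hφ.2)

theorem support_ae_eq_of_ae_sub_neg (h_supp : Function.support u ≤ᵐ[μ] A)
    (h_finite : ∀ᵐ x ∂μ.restrict A, g x 0 ≠ ⊤ ∧ g x 0 ≠ ⊥)
    (h_neg : ∀ᵐ x ∂μ.restrict A, g x (u x) - g x 0 < 0) : Function.support u =ᵐ[μ] A := by
  have h_ne : ∀ᵐ x ∂μ.restrict A, u x ≠ 0 := by
    filter_upwards [h_finite, h_neg] with x hx hx_neg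
    exact ne_zero_of_sub_apply_zero_neg hx hx_neg
  exact h_supp.antisymm (ae_imp_of_ae_restrict h_ne)

theorem statement5_general {s τ : ℝ} (hs : s ≤ 0) (hτ : 0 ≤ τ) (hA : μ A = ENNReal.ofReal τ)
    (h_supp : Function.support u ≤ᵐ[μ] A)
    (h_finite : ∀ᵐ x ∂μ.restrict A, g x 0 ≠ ⊤ ∧ g x 0 ≠ ⊥)
    (h_le : ∀ᵐ x ∂μ.restrict A, g x (u x) - g x 0 ≤ (s : EReal)) :
    s * (τ - (μ (Function.support u)).toReal) = 0 := by
  rcases hs.eq_or_lt with rfl | hs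
  · exact zero_mul _
  · have h_neg : ∀ᵐ x ∂μ.restrict A, g x (u x) - g x 0 < 0 :=
      h_le.mono fun x hx => hx.trans_lt (EReal.coe_neg'.mpr hs)
    rw [measure_congr (support_ae_eq_of_ae_sub_neg h_supp h_finite h_neg), hA,
      ENNReal.toReal_ofReal hτ, sub_self, mul_zero]

end MeasureSpace

section SolutionCharacterization

variable {Ω : Set (Fin d → ℝ)} {g : (Fin d → ℝ) → ℝ → EReal} {τ s : ℝ} {u : (Fin d → ℝ) → ℝ}
  {A : Set (Fin d → ℝ)}

theorem mOmega_support_s5 (hΩ : MeasurableSet Ω) (u : (Fin d → ℝ) → ℝ) :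
    mOmega Ω (Function.support u) = volume (suppIn Ω u) := by
  rw [mOmega, Measure.restrict_apply' hΩ, inter_comm]
  rfl

theorem CharData.mOmega_eq (h : CharData Ω g τ u s A) : mOmega Ω A = ENNReal.ofReal τ :=
  (Measure.restrict_eq_self volume h.A_subset).trans h.A_vol

theorem CharData.support_ae_le (h : CharData Ω g τ u s A) (hΩ : MeasurableSet Ω) :
    Function.support u ≤ᵐ[mOmega Ω] A := by
  have h_supp : suppIn Ω u ≤ᵐ[volume] A := ae_le_set.mpr h.supp_subset_A
  filter_upwards [ae_restrict_of_ae h_supp, ae_restrict_mem hΩ] with x hx hxΩ hux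
  exact hx ⟨hxΩ, hux⟩

theorem CharData.ae_sub_le (h : CharData Ω g τ u s A) :
    ∀ᵐ x ∂(mOmega Ω).restrict A, g x (u x) - g x 0 ≤ (s : EReal) := by
  have h_omLe : A ≤ᵐ[volume] OmLe Ω g s := ae_le_set.mpr h.A_subset_le
  filter_upwards [h.eq_ae, ae_restrict_of_ae (ae_restrict_of_ae h_omLe),
    ae_restrict_mem h.A_meas] with x hx_eq hx_omLe hxA
  exact hx_eq.trans_le (hx_omLe hxA).2

end SolutionCharacterization

/-- Corollary `cor25`: under Assumption (A), if `u̅` solves (P) and `s ≤ 0`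
comes from the solution characterization, then `s · (τ − ‖u̅‖₀) = 0`. -/
theorem statement5 (Ω : Set (Fin d → ℝ)) (g : (Fin d → ℝ) → ℝ → EReal) (τ : ℝ)
    (hA : AssumptionA Ω g τ)
    (ubar : (Fin d → ℝ) → ℝ) (h_sol : SolvesP Ω g τ ubar)
    (s : ℝ) (A : Set (Fin d → ℝ)) (h_char : CharData Ω g τ ubar s A) :
    s * (τ - (volume (suppIn Ω ubar)).toReal) = 0 := by
  rw [← mOmega_support_s5 hA.meas_Omega ubar]
  exact statement5_general h_char.s_nonpos hA.tau_pos.le h_char.mOmega_eq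
    (h_char.support_ae_le hA.meas_Omega) (ae_restrict_of_ae hA.int_g0.1) h_char.ae_sub_le
end
end

section
/- Assume (A). Let u̅ be a solution of problem (P), and let s ≤ 0 be given by the solution characterization, i.e., there is a measurable A ⊆ Ω with meas(A) = τ such that Ω_{<s} ⊆ supp u̅ ⊆ A ⊆ Ω_{≤s} up to null sets, ṽ is integrable on A, and g(x,u̅(x)) − g(x,0) = ṽ(x) a.e. on A. Set λ := −s ≥ 0. Then u̅ minimizes ∫_Ω (g(x,u(x)) + λ |u(x)|₀) dx over all measurable u : Ω → ℝ for which x ↦ g(x,u(x)) is integrable, and u̅ also minimizes ∫_Ω g(x,u(x)) dx + λ · max(‖u‖₀ − τ, 0) over all measurable u : Ω → ℝ for which x ↦ g(x,u(x)) is integrable. -/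
open MeasureTheory Set Filter Topology ENNReal NNReal

noncomputable section

variable {d : ℕ}

/-!
Put `λ = -s ≥ 0`. For almost every `x` the value `ubar x` minimizes `g x v + λ |v|₀` over `v`: the
infimum is the smaller of `g x 0` and `inf g x + λ`, the first being attained where `s ≤ ṽ x` and
the second where `ṽ x ≤ s`. Integrating gives the first minimality. If `λ > 0`, then `ubar ≠ 0`
almost everywhere on `A`, because `g x (ubar x) - g x 0 = ṽ x ≤ s < 0` there, so `‖ubar‖₀ = τ`.
Hence `λ ‖ubar‖₀ = λ τ` for every `λ ≥ 0`, and subtracting `λ τ` from the first minimality yields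
the second, since `‖u‖₀ - τ ≤ (‖u‖₀ - τ)⁺`.
-/

/-- The integrand `v ↦ φ v + c |v|₀` of the `L⁰`-penalized problem, where `φ = g x` for a fixed
point `x`. The penalty is formed in `ℝ` and then coerced, so no product in `EReal` is involved. -/
def l0Penalized (φ : ℝ → EReal) (c v : ℝ) : EReal := φ v + ((c * zeroInd v : ℝ) : EReal)

section Pointwise

variable {φ : ℝ → EReal} {a c : ℝ}

@[simp]
theorem l0Penalized_zero : l0Penalized φ c 0 = φ 0 := by
  simp [l0Penalized, zeroInd]

theorem l0Penalized_of_ne_zero {v : ℝ} (hv : v ≠ 0) : l0Penalized φ c v = φ v + c := by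
  simp [l0Penalized, zeroInd, hv]

theorem l0Penalized_le_add (hc : 0 ≤ c) (v : ℝ) : l0Penalized φ c v ≤ φ v + c := by
  rcases eq_or_ne v 0 with rfl | hv
  · rw [l0Penalized_zero]
    exact le_add_of_nonneg_right (EReal.coe_nonneg.2 hc)
  · exact (l0Penalized_of_ne_zero hv).le

theorem l0Penalized_le_of_forall_le (hc : 0 ≤ c) (hmin : ∀ v, φ a ≤ φ v)
    (h0 : φ a + c ≤ φ 0) (v : ℝ) : l0Penalized φ c a ≤ l0Penalized φ c v := by
  refine (l0Penalized_le_add hc a).trans ?_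
  rcases eq_or_ne v 0 with rfl | hv
  · rwa [l0Penalized_zero]
  · rw [l0Penalized_of_ne_zero hv]
    gcongr
    exact hmin v

theorem l0Penalized_zero_le (h : ∀ v, φ 0 ≤ φ v + c) (v : ℝ) :
    l0Penalized φ c 0 ≤ l0Penalized φ c v := by
  rw [l0Penalized_zero]
  rcases eq_or_ne v 0 with rfl | hv
  · rw [l0Penalized_zero]
  · rw [l0Penalized_of_ne_zero hv]
    exact h v

end Pointwise

section TildeV

variable {g : (Fin d → ℝ) → ℝ → EReal} {x : Fin d → ℝ} {a s : ℝ}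

theorem l0Penalized_le_of_tildeV_le (h0 : g x 0 ≠ ⊤ ∧ g x 0 ≠ ⊥) (hs : s ≤ 0)
    (heq : g x a - g x 0 = tildeV g x) (hle : tildeV g x ≤ s) (v : ℝ) :
    l0Penalized (g x) (-s) a ≤ l0Penalized (g x) (-s) v := by
  lift g x 0 to ℝ using h0 with r hr
  rw [tildeV, ← hr] at heq hle
  have hmin : g x a = ⨅ w, g x w := by
    rw [← EReal.sub_add_cancel (a := g x a) (b := r), heq, EReal.sub_add_cancel]
  refine l0Penalized_le_of_forall_le (neg_nonneg.2 hs) (fun w => hmin ▸ iInf_le _ w) ?_ v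
  rw [← heq, EReal.sub_le_iff_le_add (by simp) (by simp)] at hle
  calc g x a + ((-s : ℝ) : EReal) ≤ s + r + ((-s : ℝ) : EReal) := by gcongr
    _ = g x 0 := by rw [← hr]; norm_cast; ring

theorem l0Penalized_zero_le_of_le_tildeV (h0 : g x 0 ≠ ⊤ ∧ g x 0 ≠ ⊥)
    (hle : s ≤ tildeV g x) (v : ℝ) :
    l0Penalized (g x) (-s) 0 ≤ l0Penalized (g x) (-s) v := by
  lift g x 0 to ℝ using h0 with r hr
  rw [tildeV, ← hr, EReal.le_sub_iff_add_le (by simp) (by simp)] at hle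
  refine l0Penalized_zero_le (fun w => ?_) v
  calc g x 0 = s + r + ((-s : ℝ) : EReal) := by rw [← hr]; norm_cast; ring
    _ ≤ g x w + ((-s : ℝ) : EReal) := by
      gcongr
      exact hle.trans (iInf_le _ w)

end TildeV

section Integration

variable {α : Type*} [MeasurableSpace α] {μ : Measure α} {f h : α → ℝ} {S T : Set α} {c : ℝ}

theorem integrable_const_mul_indicator_one (hS : MeasurableSet S) (hμS : μ S ≠ ⊤) (c : ℝ) :
    Integrable (fun x => c * S.indicator 1 x) μ :=
  ((integrable_indicator_iff hS).2 (integrableOn_const hμS)).const_mul c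

theorem integral_add_const_mul_indicator_one (hf : Integrable f μ) (hS : MeasurableSet S)
    (hμS : μ S ≠ ⊤) (c : ℝ) :
    ∫ x, f x + c * S.indicator 1 x ∂μ = ∫ x, f x ∂μ + c * μ.real S := by
  rw [integral_add hf (integrable_const_mul_indicator_one hS hμS c), integral_const_mul,
    integral_indicator_one hS]

theorem integral_add_mul_measure_le (hf : Integrable f μ) (hh : Integrable h μ)
    (hS : MeasurableSet S) (hμS : μ S ≠ ⊤) (hT : MeasurableSet T) (hc : 0 ≤ c)
    (hle : ∀ᵐ x ∂μ, f x + c * S.indicator 1 x ≤ h x + c * T.indicator 1 x) :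
    ((∫ x, f x ∂μ : ℝ) : EReal) + (c : EReal) * (μ S : EReal) ≤
      ((∫ x, h x ∂μ : ℝ) : EReal) + (c : EReal) * (μ T : EReal) := by
  rcases hc.eq_or_lt with rfl | hc
  · simpa using integral_mono_ae hf hh (hle.mono fun x hx => by simpa using hx)
  by_cases hμT : μ T = ⊤
  · rw [hμT, EReal.coe_ennreal_top, EReal.coe_mul_top_of_pos hc, EReal.coe_add_top]
    exact le_top
  have hreal : ∫ x, f x ∂μ + c * μ.real S ≤ ∫ x, h x ∂μ + c * μ.real T := by
    rw [← integral_add_const_mul_indicator_one hf hS hμS,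
      ← integral_add_const_mul_indicator_one hh hT hμT]
    exact integral_mono_ae (hf.add (integrable_const_mul_indicator_one hS hμS c))
      (hh.add (integrable_const_mul_indicator_one hT hμT c)) hle
  rw [← EReal.coe_ennreal_toReal hμS, ← EReal.coe_ennreal_toReal hμT]
  exact_mod_cast hreal

end Integration

theorem le_add_mul_tsub_of_add_mul_le {J K c : ℝ} {b t : ℝ≥0∞} (hc : 0 ≤ c) (ht : t ≠ ⊤)
    (h : (J : EReal) + (c : EReal) * (t : EReal) ≤ (K : EReal) + (c : EReal) * (b : EReal)) :
    (J : EReal) ≤ (K : EReal) + (c : EReal) * ((b - t : ℝ≥0∞) : EReal) := by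
  have hct : (c : EReal) * (t : EReal) = ((c * t.toReal : ℝ) : EReal) := by
    rw [← EReal.coe_ennreal_toReal ht, EReal.coe_mul]
  have hsplit : (c : EReal) * (b : EReal) ≤
      (c : EReal) * ((b - t : ℝ≥0∞) : EReal) + (c : EReal) * (t : EReal) := by
    rw [← EReal.left_distrib_of_nonneg (EReal.coe_ennreal_nonneg _) (EReal.coe_ennreal_nonneg _),
      ← EReal.coe_ennreal_add]
    exact mul_le_mul_of_nonneg_left (EReal.coe_ennreal_le_coe_ennreal_iff.2 le_tsub_add)
      (EReal.coe_nonneg.2 hc)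
  refine (EReal.addLECancellable_coe (c * t.toReal)).add_le_add_iff_right.1 ?_
  rw [← hct, add_assoc]
  exact h.trans (by gcongr)

section Support

variable {Ω : Set (Fin d → ℝ)} {u : (Fin d → ℝ) → ℝ}

theorem measurableSet_suppIn (hΩ : MeasurableSet Ω) (hu : Measurable u) :
    MeasurableSet (suppIn Ω u) :=
  hΩ.inter (hu (measurableSet_singleton 0).compl)

theorem mOmega_suppIn : mOmega Ω (suppIn Ω u) = volume (suppIn Ω u) :=
  Measure.restrict_eq_self _ fun _ hx => hx.1

theorem zeroInd_eq_indicator_suppIn {x : Fin d → ℝ} (hx : x ∈ Ω) :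
    zeroInd (u x) = (suppIn Ω u).indicator 1 x := by
  by_cases h : u x = 0 <;> simp [zeroInd, suppIn, h, hx]

end Support

namespace CharData

variable {Ω A : Set (Fin d → ℝ)} {g : (Fin d → ℝ) → ℝ → EReal} {τ s : ℝ}
  {ubar u : (Fin d → ℝ) → ℝ}

theorem volume_suppIn_le (h : CharData Ω g τ ubar s A) :
    volume (suppIn Ω ubar) ≤ ENNReal.ofReal τ :=
  h.A_vol ▸ measure_mono_ae (ae_le_set.2 h.supp_subset_A)

theorem volume_suppIn_ne_top (h : CharData Ω g τ ubar s A) : volume (suppIn Ω ubar) ≠ ⊤ :=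
  ne_top_of_le_ne_top ENNReal.ofReal_ne_top h.volume_suppIn_le

theorem ae_mem_and_tildeV_le_or_notMem_and_le_tildeV (h : CharData Ω g τ ubar s A)
    (hΩ : MeasurableSet Ω) :
    ∀ᵐ x ∂mOmega Ω,
      (x ∈ A ∧ g x (ubar x) - g x 0 = tildeV g x ∧ tildeV g x ≤ s) ∨
        (x ∉ A ∧ ubar x = 0 ∧ s ≤ tildeV g x) := by
  have ae_notMem {N : Set (Fin d → ℝ)} (hN : volume N = 0) : ∀ᵐ x ∂mOmega Ω, x ∉ N :=
    ae_restrict_of_ae (measure_eq_zero_iff_ae_notMem.1 hN)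
  filter_upwards [ae_restrict_mem hΩ, ae_notMem h.lt_subset_supp, ae_notMem h.supp_subset_A,
    ae_notMem h.A_subset_le, (ae_restrict_iff' h.A_meas).1 h.eq_ae]
    with x hxΩ hlt_supp hsupp_A hA_le heq
  by_cases hxA : x ∈ A
  · refine .inl ⟨hxA, heq hxA, ?_⟩
    by_contra hgt
    exact hA_le ⟨hxA, fun hle => hgt hle.2⟩
  · have hx_supp : x ∉ suppIn Ω ubar := fun hx => hsupp_A ⟨hx, hxA⟩
    refine .inr ⟨hxA, ?_, ?_⟩
    · by_contra hne
      exact hx_supp ⟨hxΩ, hne⟩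
    · by_contra hlt
      exact hlt_supp ⟨⟨hxΩ, not_le.1 hlt⟩, hx_supp⟩

theorem ae_l0Penalized_le (h : CharData Ω g τ ubar s A) (hΩ : MeasurableSet Ω)
    (hg0 : IntegrableE (mOmega Ω) fun x => g x 0) :
    ∀ᵐ x ∂mOmega Ω, ∀ v, l0Penalized (g x) (-s) (ubar x) ≤ l0Penalized (g x) (-s) v := by
  filter_upwards [h.ae_mem_and_tildeV_le_or_notMem_and_le_tildeV hΩ, hg0.1] with x hx h0
  rcases hx with ⟨-, heq, hle⟩ | ⟨-, hzero, hle⟩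
  · exact l0Penalized_le_of_tildeV_le h0 h.s_nonpos heq hle
  · rw [hzero]
    exact l0Penalized_zero_le_of_le_tildeV h0 hle

theorem ae_eq_add_indicator_tildeV (h : CharData Ω g τ ubar s A) (hΩ : MeasurableSet Ω)
    (hg0 : IntegrableE (mOmega Ω) fun x => g x 0) :
    ∀ᵐ x ∂mOmega Ω, g x (ubar x) =
      (((g x 0).toReal + A.indicator (fun y => (tildeV g y).toReal) x : ℝ) : EReal) := by
  filter_upwards [h.ae_mem_and_tildeV_le_or_notMem_and_le_tildeV hΩ, hg0.1,
    (ae_restrict_iff' h.A_meas).1 h.tv_int.1] with x hx h0 htv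
  rcases hx with ⟨hxA, heq, -⟩ | ⟨hxA, hzero, -⟩
  · rw [indicator_of_mem hxA, EReal.coe_add, EReal.coe_toReal (htv hxA).1 (htv hxA).2, ← heq]
    lift g x 0 to ℝ using h0 with r
    rw [EReal.toReal_coe, add_comm, EReal.sub_add_cancel]
  · rw [indicator_of_notMem hxA, add_zero, hzero, EReal.coe_toReal h0.1 h0.2]

theorem integrableE_comp (h : CharData Ω g τ ubar s A) (hΩ : MeasurableSet Ω)
    (hg0 : IntegrableE (mOmega Ω) fun x => g x 0) :
    IntegrableE (mOmega Ω) fun x => g x (ubar x) := by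
  have hcomp := h.ae_eq_add_indicator_tildeV hΩ hg0
  constructor
  · filter_upwards [hcomp] with x hx
    rw [hx]
    exact ⟨EReal.coe_ne_top _, EReal.coe_ne_bot _⟩
  · refine (hg0.2.add ((integrable_indicator_iff h.A_meas).2 h.tv_int.2)).congr ?_
    filter_upwards [hcomp] with x hx
    rw [hx, EReal.toReal_coe, Pi.add_apply]

theorem intE_add_mul_volume_suppIn_le (h : CharData Ω g τ ubar s A) (hΩ : MeasurableSet Ω)
    (hg0 : IntegrableE (mOmega Ω) fun x => g x 0) (hubar : Measurable ubar)
    (hu : Measurable u) (hgu : IntegrableE (mOmega Ω) fun x => g x (u x)) :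
    ((intE (mOmega Ω) fun x => g x (ubar x) : ℝ) : EReal)
        + ((-s : ℝ) : EReal) * (volume (suppIn Ω ubar) : EReal) ≤
      ((intE (mOmega Ω) fun x => g x (u x) : ℝ) : EReal)
        + ((-s : ℝ) : EReal) * (volume (suppIn Ω u) : EReal) := by
  have hgubar := h.integrableE_comp hΩ hg0
  rw [← mOmega_suppIn, ← mOmega_suppIn (u := u)]
  refine integral_add_mul_measure_le hgubar.2 hgu.2 (measurableSet_suppIn hΩ hubar)
    (mOmega_suppIn.trans_ne h.volume_suppIn_ne_top) (measurableSet_suppIn hΩ hu)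
    (neg_nonneg.2 h.s_nonpos) ?_
  filter_upwards [h.ae_l0Penalized_le hΩ hg0, hgubar.1, hgu.1, ae_restrict_mem hΩ]
    with x hmin hbar_fin hu_fin hxΩ
  rw [← zeroInd_eq_indicator_suppIn hxΩ, ← zeroInd_eq_indicator_suppIn hxΩ,
    ← EReal.coe_le_coe_iff, EReal.coe_add, EReal.coe_add,
    EReal.coe_toReal hbar_fin.1 hbar_fin.2, EReal.coe_toReal hu_fin.1 hu_fin.2]
  exact hmin (u x)

theorem ofReal_le_volume_suppIn (h : CharData Ω g τ ubar s A) (hΩ : MeasurableSet Ω)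
    (hg0 : IntegrableE (mOmega Ω) fun x => g x 0) (hs : s < 0) :
    ENNReal.ofReal τ ≤ volume (suppIn Ω ubar) := by
  rw [← h.A_vol]
  apply measure_mono_ae
  filter_upwards [(ae_restrict_iff' hΩ).1 (h.ae_mem_and_tildeV_le_or_notMem_and_le_tildeV hΩ),
    (ae_restrict_iff' hΩ).1 hg0.1] with x hx h0 hxA
  have hxΩ := h.A_subset hxA
  refine ⟨hxΩ, fun hzero => ?_⟩
  rcases hx hxΩ with ⟨-, heq, hle⟩ | ⟨hxA', -⟩
  · rw [← heq, hzero, EReal.sub_self (h0 hxΩ).1 (h0 hxΩ).2] at hle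
    exact hs.not_ge (EReal.coe_nonneg.1 hle)
  · exact hxA' hxA

theorem complementary_slackness (h : CharData Ω g τ ubar s A) (hΩ : MeasurableSet Ω)
    (hg0 : IntegrableE (mOmega Ω) fun x => g x 0) :
    ((-s : ℝ) : EReal) * (volume (suppIn Ω ubar) : EReal) =
      ((-s : ℝ) : EReal) * (ENNReal.ofReal τ : EReal) := by
  rcases h.s_nonpos.eq_or_lt with rfl | hs
  · simp
  · rw [h.volume_suppIn_le.antisymm (h.ofReal_le_volume_suppIn hΩ hg0 hs)]

end CharData

theorem statement6_general {Ω A : Set (Fin d → ℝ)} {g : (Fin d → ℝ) → ℝ → EReal} {τ s : ℝ}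
    {ubar : (Fin d → ℝ) → ℝ} (hΩ : MeasurableSet Ω)
    (hg0 : IntegrableE (mOmega Ω) fun x => g x 0) (hubar : Measurable ubar)
    (h_char : CharData Ω g τ ubar s A) :
    (∀ u : (Fin d → ℝ) → ℝ, Measurable u →
      IntegrableE (mOmega Ω) (fun x => g x (u x)) →
      ((intE (mOmega Ω) fun x => g x (ubar x) : ℝ) : EReal)
          + ((-s : ℝ) : EReal) * (volume (suppIn Ω ubar) : EReal) ≤
        ((intE (mOmega Ω) fun x => g x (u x) : ℝ) : EReal)
          + ((-s : ℝ) : EReal) * (volume (suppIn Ω u) : EReal)) ∧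
    (∀ u : (Fin d → ℝ) → ℝ, Measurable u →
      IntegrableE (mOmega Ω) (fun x => g x (u x)) →
      ((intE (mOmega Ω) fun x => g x (ubar x) : ℝ) : EReal)
          + ((-s : ℝ) : EReal) * ((volume (suppIn Ω ubar) - ENNReal.ofReal τ : ℝ≥0∞) : EReal) ≤
        ((intE (mOmega Ω) fun x => g x (u x) : ℝ) : EReal)
          + ((-s : ℝ) : EReal) * ((volume (suppIn Ω u) - ENNReal.ofReal τ : ℝ≥0∞) : EReal)) := by
  have hpen {u : (Fin d → ℝ) → ℝ} (hu : Measurable u)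
      (hgu : IntegrableE (mOmega Ω) fun x => g x (u x)) :=
    h_char.intE_add_mul_volume_suppIn_le hΩ hg0 hubar hu hgu
  refine ⟨fun u hu hgu => hpen hu hgu, fun u hu hgu => ?_⟩
  rw [tsub_eq_zero_of_le h_char.volume_suppIn_le, EReal.coe_ennreal_zero, mul_zero, add_zero]
  refine le_add_mul_tsub_of_add_mul_le (neg_nonneg.2 h_char.s_nonpos) ENNReal.ofReal_ne_top ?_
  rw [← h_char.complementary_slackness hΩ hg0]
  exact hpen hu hgu

/-- Corollary `cor_int_penalty`: under Assumption (A), if `u̅` solves (P),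
`s ≤ 0` comes from the solution characterization, and `λ := −s ≥ 0`, then `u̅` minimizes
`∫_Ω g(x,u(x)) dx + λ ‖u‖₀` and also `∫_Ω g(x,u(x)) dx + λ (‖u‖₀ − τ)⁺` over all measurable
`u` with `g(·,u)` integrable.  (The penalty terms are interpreted in `EReal`, since `‖u‖₀`
may be infinite.) -/
theorem statement6 (Ω : Set (Fin d → ℝ)) (g : (Fin d → ℝ) → ℝ → EReal) (τ : ℝ)
    (hA : AssumptionA Ω g τ)
    (ubar : (Fin d → ℝ) → ℝ) (h_sol : SolvesP Ω g τ ubar)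
    (s : ℝ) (A : Set (Fin d → ℝ)) (h_char : CharData Ω g τ ubar s A) :
    (∀ u : (Fin d → ℝ) → ℝ, Measurable u →
      IntegrableE (mOmega Ω) (fun x => g x (u x)) →
      ((intE (mOmega Ω) fun x => g x (ubar x) : ℝ) : EReal)
          + ((-s : ℝ) : EReal) * (volume (suppIn Ω ubar) : EReal) ≤
        ((intE (mOmega Ω) fun x => g x (u x) : ℝ) : EReal)
          + ((-s : ℝ) : EReal) * (volume (suppIn Ω u) : EReal)) ∧
    (∀ u : (Fin d → ℝ) → ℝ, Measurable u →
      IntegrableE (mOmega Ω) (fun x => g x (u x)) →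
      ((intE (mOmega Ω) fun x => g x (ubar x) : ℝ) : EReal)
          + ((-s : ℝ) : EReal) * ((volume (suppIn Ω ubar) - ENNReal.ofReal τ : ℝ≥0∞) : EReal) ≤
        ((intE (mOmega Ω) fun x => g x (u x) : ℝ) : EReal)
          + ((-s : ℝ) : EReal) * ((volume (suppIn Ω u) - ENNReal.ofReal τ : ℝ≥0∞) : EReal)) :=
  statement6_general hA.meas_Omega hA.int_g0 h_sol.1.1 h_char
end
end

section
/- Assume (A). Let λ' ≥ 0 and let u̅ be a measurable function with ‖u̅‖₀ = τ and x ↦ g(x,u̅(x)) integrable which minimizes ∫_Ω (g(x,v(x)) + λ' |v(x)|₀) dx over all measurable v : Ω → ℝ for which x ↦ g(x,v(x)) is integrable. Then u̅ is a solution of problem (P). -/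
open MeasureTheory Set Filter Topology ENNReal NNReal

noncomputable section

variable {d : ℕ}

/-!
The penalty is a Lagrangian for the constraint `‖u‖₀ ≤ τ`: a competitor `v` with `‖v‖₀ ≤ ‖u̅‖₀`
pays a penalty at most that of `u̅`, so if its integral were smaller than that of `u̅`, its
penalized functional would be smaller too. As `‖u̅‖₀ = τ` is finite, the penalty of `u̅` can be
cancelled.
-/

theorem isMinOn_sublevel_of_isMinOn_add
    {α M : Type*} [AddCommMagma M] [Preorder M] [AddLeftMono M]
    {f p : α → M} {S : Set α} {x : α} (hp : AddLECancellable (p x))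
    (hmin : IsMinOn (fun y => f y + p y) S x) : IsMinOn f {y ∈ S | p y ≤ p x} x := by
  rintro y ⟨hyS, hpy⟩
  refine hp.add_le_add_iff_right.1 ?_
  calc f x + p x ≤ f y + p y := hmin hyS
    _ ≤ f y + p x := by gcongr

theorem addLECancellable_coe_mul_coe_ennreal (r : ℝ) {m : ℝ≥0∞} (hm : m ≠ ⊤) :
    AddLECancellable ((r : EReal) * (m : EReal)) := by
  lift m to ℝ≥0 using hm
  exact EReal.addLECancellable_coe (r * m)

theorem isMinOn_sublevel_of_isMinOn_add_coe_mul {α : Type*} {f : α → EReal} {c : α → ℝ≥0∞}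
    {S : Set α} {x : α} {r : ℝ} (hr : 0 ≤ r) (hcx : c x ≠ ⊤)
    (hmin : IsMinOn (fun y => f y + (r : EReal) * (c y : EReal)) S x) :
    IsMinOn f {y ∈ S | c y ≤ c x} x := by
  refine (isMinOn_sublevel_of_isMinOn_add (p := fun y => (r : EReal) * (c y : EReal))
    (addLECancellable_coe_mul_coe_ennreal r hcx) hmin).on_subset ?_
  rintro y ⟨hyS, hcy⟩
  exact ⟨hyS, mul_le_mul_of_nonneg_left (EReal.coe_ennreal_le_coe_ennreal_iff.2 hcy)
    (EReal.coe_nonneg.2 hr)⟩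

theorem statement7_general (Ω : Set (Fin d → ℝ)) (g : (Fin d → ℝ) → ℝ → EReal)
    (lam : ℝ) (hlam : 0 ≤ lam)
    (ubar : (Fin d → ℝ) → ℝ) (h_meas : Measurable ubar)
    (h_int : IntegrableE (mOmega Ω) fun x => g x (ubar x))
    (h_supp : volume (suppIn Ω ubar) ≠ ⊤)
    (h_min : ∀ v : (Fin d → ℝ) → ℝ, Measurable v →
      IntegrableE (mOmega Ω) (fun x => g x (v x)) →
      ((intE (mOmega Ω) fun x => g x (ubar x) : ℝ) : EReal)
          + (lam : EReal) * (volume (suppIn Ω ubar) : EReal) ≤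
        ((intE (mOmega Ω) fun x => g x (v x) : ℝ) : EReal)
          + (lam : EReal) * (volume (suppIn Ω v) : EReal)) :
    SolvesP Ω g (volume (suppIn Ω ubar)).toReal ubar := by
  have penalized_min : IsMinOn
      (fun v => ((intE (mOmega Ω) fun x => g x (v x) : ℝ) : EReal)
        + (lam : EReal) * (volume (suppIn Ω v) : EReal))
      {v | Measurable v ∧ IntegrableE (mOmega Ω) fun x => g x (v x)} ubar :=
    fun v ⟨hv_meas, hv_int⟩ => h_min v hv_meas hv_int
  have constrained_min := isMinOn_sublevel_of_isMinOn_add_coe_mul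
    (c := fun v => volume (suppIn Ω v)) hlam h_supp penalized_min
  simp only [SolvesP, FeasibleP, ofReal_toReal h_supp]
  exact ⟨⟨h_meas, h_int, le_rfl⟩, fun v ⟨hv_meas, hv_int, hv_supp⟩ =>
    EReal.coe_le_coe_iff.1 (constrained_min ⟨⟨hv_meas, hv_int⟩, hv_supp⟩)⟩

/-- under Assumption (A), if `λ' ≥ 0` and `u̅` with `‖u̅‖₀ = τ` minimizes the
penalized functional `∫_Ω g(x,v(x)) dx + λ' ‖v‖₀` over all measurable `v` with `g(·,v)`
integrable, then `u̅` solves (P). -/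
theorem statement7 (Ω : Set (Fin d → ℝ)) (g : (Fin d → ℝ) → ℝ → EReal) (τ : ℝ)
    (hA : AssumptionA Ω g τ)
    (lam : ℝ) (hlam : 0 ≤ lam)
    (ubar : (Fin d → ℝ) → ℝ) (h_meas : Measurable ubar)
    (h_int : IntegrableE (mOmega Ω) fun x => g x (ubar x))
    (h_supp : volume (suppIn Ω ubar) = ENNReal.ofReal τ)
    (h_min : ∀ v : (Fin d → ℝ) → ℝ, Measurable v →
      IntegrableE (mOmega Ω) (fun x => g x (v x)) →
      ((intE (mOmega Ω) fun x => g x (ubar x) : ℝ) : EReal)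
          + ((lam : ℝ) : EReal) * (volume (suppIn Ω ubar) : EReal) ≤
        ((intE (mOmega Ω) fun x => g x (v x) : ℝ) : EReal)
          + ((lam : ℝ) : EReal) * (volume (suppIn Ω v) : EReal)) :
    SolvesP Ω g τ ubar := by
  have h_tau : (volume (suppIn Ω ubar)).toReal = τ := by rw [h_supp, toReal_ofReal hA.tau_pos.le]
  exact h_tau ▸ statement7_general Ω g lam hlam ubar h_meas h_int (h_supp ▸ ofReal_ne_top) h_min
end
end

section
/- Let Ω ⊆ ℝ^d be Lebesgue measurable, let L > 0 and α ≥ 0 with L + α > 0, let λ_k, λ_{k+1} ≥ 0, and let u_k, u_{k+1} ∈ L²(Ω) be such that for j ∈ {k, k+1} and almost all x ∈ Ω: u_j(x) ≠ 0 implies |u_j(x)| ≥ √(2λ_j/(L+α)) (as holds for consecutive iterates of the proximal gradient algorithm with the multipliers λ_j from the subproblems). With χ_j(x) := |u_j(x)|₀, it holds ‖u_{k+1} − u_k‖²_{L²(Ω)} ≥ (2 min(λ_k, λ_{k+1})/(L+α)) ‖χ_{k+1} − χ_k‖_{L¹(Ω)}. -/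
open MeasureTheory Set Filter Topology ENNReal NNReal

noncomputable section

variable {d : ℕ}

/-- Assumption (B): `f` is bounded from below and Fréchet differentiable with gradient
`gradf` (the Riesz representative of the derivative), `gradf` is Lipschitz with constant
`Lf`, and `α ≥ 0`. -/
structure AssumptionB (Ω : Set (Fin d → ℝ))
    (f : Lp ℝ 2 (mOmega Ω) → ℝ) (gradf : Lp ℝ 2 (mOmega Ω) → Lp ℝ 2 (mOmega Ω))
    (Lf α : ℝ) : Prop where
  bdd_below : ∃ c : ℝ, ∀ u, c ≤ f u
  deriv : ∀ u, HasFDerivAt f (innerSL ℝ (gradf u)) u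
  lipschitz : ∀ u v, ‖gradf u - gradf v‖ ≤ Lf * ‖u - v‖
  alpha_nonneg : 0 ≤ α

/-- `u` solves the proximal-gradient subproblem `(S_k)` with data `u_k`: it is feasible for
the `L⁰` constraint and minimizes
`f(u_k) + ∫ ∇f(u_k)(u − u_k) + (L/2)‖u − u_k‖² + (α/2)‖u‖²` subject to `‖u‖₀ ≤ τ`. -/
def SolvesSub (Ω : Set (Fin d → ℝ))
    (f : Lp ℝ 2 (mOmega Ω) → ℝ) (gradf : Lp ℝ 2 (mOmega Ω) → Lp ℝ 2 (mOmega Ω))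
    (α L τ : ℝ) (uk u : Lp ℝ 2 (mOmega Ω)) : Prop :=
  mOmega Ω {x | u x ≠ 0} ≤ ENNReal.ofReal τ ∧
    ∀ v : Lp ℝ 2 (mOmega Ω), mOmega Ω {x | v x ≠ 0} ≤ ENNReal.ofReal τ →
      f uk + ∫ x, gradf uk x * (u x - uk x) ∂mOmega Ω
          + L / 2 * ‖u - uk‖ ^ 2 + α / 2 * ‖u‖ ^ 2 ≤
        f uk + ∫ x, gradf uk x * (v x - uk x) ∂mOmega Ω
          + L / 2 * ‖v - uk‖ ^ 2 + α / 2 * ‖v‖ ^ 2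

/-! On the symmetric difference of the supports one of the two functions vanishes, so there the
difference is as large in norm as the other function, hence at least the smaller threshold.
Chebyshev's inequality for the difference then bounds the measure of that set, which is the
`L¹` distance of the two support indicators. -/

open scoped symmDiff

lemma min_le_norm_sub_of_mem_symmDiff_support {X E : Type*} [NormedAddCommGroup E] {u v : X → E}
    {r s : ℝ} {x : X} (hu : u x ≠ 0 → r ≤ ‖u x‖) (hv : v x ≠ 0 → s ≤ ‖v x‖)
    (hx : x ∈ Function.support v ∆ Function.support u) : min r s ≤ ‖v x - u x‖ := by
  rcases hx with ⟨hvx, hux⟩ | ⟨hux, hvx⟩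
  · rw [Function.notMem_support.mp hux, sub_zero]
    exact min_le_of_right_le (hv hvx)
  · rw [Function.notMem_support.mp hvx, zero_sub, norm_neg]
    exact min_le_of_left_le (hu hux)

lemma zeroInd_eq_indicator_support {X : Type*} (u : X → ℝ) (x : X) :
    zeroInd (u x) = (Function.support u).indicator 1 x := by
  by_cases hx : u x = 0 <;> simp [zeroInd, hx]

lemma lintegral_ofReal_abs_zeroInd_sub {X : Type*} [MeasurableSpace X] {μ : Measure X}
    {u v : X → ℝ} (hu : AEMeasurable u μ) (hv : AEMeasurable v μ) :
    ∫⁻ x, ENNReal.ofReal |zeroInd (v x) - zeroInd (u x)| ∂μ =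
      μ (Function.support v ∆ Function.support u) := by
  have h_indicator (x : X) : ENNReal.ofReal |zeroInd (v x) - zeroInd (u x)| =
      (Function.support v ∆ Function.support u).indicator 1 x := by
    rw [zeroInd_eq_indicator_support v, zeroInd_eq_indicator_support u, ← abs_indicator_symmDiff]
    by_cases hx : x ∈ Function.support v ∆ Function.support u <;> simp [hx]
  have h_support {w : X → ℝ} (hw : AEMeasurable w μ) :
      NullMeasurableSet (Function.support w) μ :=
    hw.nullMeasurable (measurableSet_singleton 0).compl
  simp_rw [h_indicator]
  exact lintegral_indicator_one₀ ((h_support hv).symmDiff (h_support hu))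

/- Negative arguments are covered as well: there both `√` and `ENNReal.ofReal` are `0`. -/
lemma ofReal_min_sqrt_sq (a b : ℝ) :
    ENNReal.ofReal (min (√a) (√b)) ^ 2 = ENNReal.ofReal (min a b) := by
  rw [← Real.sqrt_monotone.map_min, ← ENNReal.ofReal_pow (Real.sqrt_nonneg _)]
  rcases le_total 0 (min a b) with h | h
  · rw [Real.sq_sqrt h]
  · simp [Real.sqrt_eq_zero_of_nonpos h, ENNReal.ofReal_of_nonpos h]

theorem statement13_general {X E : Type*} [MeasurableSpace X] {μ : Measure X}
    [NormedAddCommGroup E] {p : ℝ≥0∞} (hp_ne_zero : p ≠ 0) (hp_ne_top : p ≠ ∞) {r s : ℝ}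
    {u v : Lp E p μ} (hu : ∀ᵐ x ∂μ, u x ≠ 0 → r ≤ ‖u x‖) (hv : ∀ᵐ x ∂μ, v x ≠ 0 → s ≤ ‖v x‖) :
    ENNReal.ofReal (min r s) ^ p.toReal * μ (Function.support v ∆ Function.support u) ≤
      ‖v - u‖ₑ ^ p.toReal := by
  have h_subset : (Function.support v ∆ Function.support u : Set X) ≤ᵐ[μ]
      {x | ENNReal.ofReal (min r s) ≤ ‖(v - u) x‖ₑ} := by
    filter_upwards [hu, hv, Lp.coeFn_sub v u] with x hux hvx h_sub hx
    change _ ≤ ‖(v - u) x‖ₑ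
    rw [h_sub, Pi.sub_apply, ← ofReal_norm]
    exact ENNReal.ofReal_le_ofReal (min_le_norm_sub_of_mem_symmDiff_support hux hvx hx)
  calc
    _ ≤ ENNReal.ofReal (min r s) ^ p.toReal *
          μ {x | ENNReal.ofReal (min r s) ≤ ‖(v - u) x‖ₑ} :=
      mul_le_mul' le_rfl (measure_mono_ae h_subset)
    _ ≤ eLpNorm (v - u : Lp E p μ) p μ ^ p.toReal :=
      mul_meas_ge_le_pow_eLpNorm' μ hp_ne_zero hp_ne_top (Lp.aestronglyMeasurable _) _
    _ = ‖v - u‖ₑ ^ p.toReal := by rw [Lp.enorm_def]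

/-- if consecutive iterates satisfy the support lower bound
`|u_j(x)| ≥ √(2λ_j/(L+α))` a.e. on their supports, then with `χ_j = |u_j(·)|₀` it holds
`‖u_{k+1} − u_k‖²_{L²} ≥ (2 min(λ_k, λ_{k+1})/(L+α)) ‖χ_{k+1} − χ_k‖_{L¹}`
(stated in `ℝ≥0∞` to allow `Ω` of infinite measure). -/
theorem statement13 (Ω : Set (Fin d → ℝ)) (hΩ : MeasurableSet Ω)
    (L α : ℝ) (hL : 0 < L) (hα : 0 ≤ α) (hLα : 0 < L + α)
    (lamk lamk1 : ℝ) (hlamk : 0 ≤ lamk) (hlamk1 : 0 ≤ lamk1)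
    (u0 u1 : Lp ℝ 2 (mOmega Ω))
    (h0 : ∀ᵐ x ∂mOmega Ω, u0 x ≠ 0 → Real.sqrt (2 * lamk / (L + α)) ≤ |u0 x|)
    (h1 : ∀ᵐ x ∂mOmega Ω, u1 x ≠ 0 → Real.sqrt (2 * lamk1 / (L + α)) ≤ |u1 x|) :
    ENNReal.ofReal (2 * min lamk lamk1 / (L + α)) *
        ∫⁻ x, ENNReal.ofReal |zeroInd (u1 x) - zeroInd (u0 x)| ∂mOmega Ω ≤
      ENNReal.ofReal (‖u1 - u0‖ ^ 2) := by
  rw [lintegral_ofReal_abs_zeroInd_sub (Lp.aestronglyMeasurable u0).aemeasurable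
    (Lp.aestronglyMeasurable u1).aemeasurable, mul_min_of_nonneg _ _ zero_le_two,
    ← min_div_div_right hLα.le, ← ofReal_min_sqrt_sq,
    ENNReal.ofReal_pow (norm_nonneg _), ofReal_norm]
  simpa using statement13_general two_ne_zero ofNat_ne_top h0 h1
end
end

section
/- Assume (B) and L > L_f. Let (u_k)_{k≥0} be a sequence generated by the proximal gradient algorithm, and for each k let λ_{k+1} ≥ 0 be the multiplier of the subproblem (S_k), satisfying λ_{k+1}(‖u_{k+1}‖₀ − τ) = 0 and, for a.e. x, u_{k+1}(x) ≠ 0 implies |u_{k+1}(x)| ≥ √(2λ_{k+1}/(L+α)). Suppose liminf_{k→∞} λ_k > 0. Then the sequence χ_k := |u_k(·)|₀ converges in L¹(Ω) to a characteristic function χ̄, and every weak sequential limit point u̅ of (u_k) in L²(Ω) satisfies ‖u̅‖₀ ≤ τ. -/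
open MeasureTheory Set Filter Topology ENNReal NNReal

noncomputable section

variable {d : ℕ}

/-!
Put `F v = f v + α / 2 * ‖v‖ ^ 2`. Comparing `u (k + 1)` with the competitor `u k` in the
subproblem and using the descent lemma gives, for `k ≥ 1`,
`(L - Lf) / 2 * ‖u (k + 1) - u k‖ ^ 2 ≤ F (u k) - F (u (k + 1))`, so the squared step lengths are
summable. The multipliers keep the nonzero values of the late iterates at a distance `s > 0` from
`0`, so by Chebyshev's inequality a step of length `r` changes the support on a set of measure at
most `(r / s) ^ 2`. Hence the late changes of support have finite total measure, the supports
converge in measure to their `limsup`, and for every `ε > 0` the supports of all late iterates lie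
in one set of measure at most `τ + ε`. Vanishing off a fixed set passes to weak limits.
-/

open Function
open scoped symmDiff InnerProductSpace

section ProximalGradient

variable {H : Type*} [NormedAddCommGroup H] [InnerProductSpace ℝ H]
  {f : H → ℝ} {g : H → H} {K : ℝ≥0} {α L : ℝ} {C : Set H}

lemma le_add_inner_add_sq_of_lipschitzWith_gradient
    (hf : ∀ u, HasFDerivAt f (innerSL ℝ (g u)) u) (hg : LipschitzWith K g) (u v : H) :
    f v ≤ f u + ⟪g u, v - u⟫_ℝ + K / 2 * ‖v - u‖ ^ 2 := by
  set h := v - u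
  let gap : ℝ → ℝ := fun t => f (u + t • h) - t * ⟪g u, h⟫_ℝ - K / 2 * t ^ 2 * ‖h‖ ^ 2
  have hgap (t : ℝ) : HasDerivAt gap
      (⟪g (u + t • h), h⟫_ℝ - ⟪g u, h⟫_ℝ - K * t * ‖h‖ ^ 2) t := by
    have hline : HasDerivAt (fun t : ℝ => u + t • h) h t := by
      simpa using ((hasDerivAt_id t).smul_const h).const_add u
    have hlin : HasDerivAt (fun t : ℝ => t * ⟪g u, h⟫_ℝ) ⟪g u, h⟫_ℝ t := by
      simpa using (hasDerivAt_id t).mul_const ⟪g u, h⟫_ℝ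
    have hquad : HasDerivAt (fun t : ℝ => K / 2 * t ^ 2 * ‖h‖ ^ 2) (K * t * ‖h‖ ^ 2) t :=
      (((hasDerivAt_pow 2 t).const_mul (K / 2 : ℝ)).mul_const (‖h‖ ^ 2)).congr_deriv
        (by push_cast; ring)
    exact (((hf (u + t • h)).comp_hasDerivAt t hline).sub hlin).sub hquad
  have hanti : AntitoneOn gap (Icc 0 1) := by
    refine antitoneOn_of_deriv_nonpos (convex_Icc 0 1)
      (fun t _ => (hgap t).continuousAt.continuousWithinAt)
      (fun t _ => (hgap t).differentiableAt.differentiableWithinAt) fun t ht => ?_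
    rw [interior_Icc] at ht
    have hinner : ⟪g (u + t • h) - g u, h⟫_ℝ ≤ K * t * ‖h‖ ^ 2 := calc
      _ ≤ ‖g (u + t • h) - g u‖ * ‖h‖ := real_inner_le_norm _ _
      _ ≤ K * ‖(u + t • h) - u‖ * ‖h‖ := by gcongr; exact hg.norm_sub_le _ _
      _ = K * t * ‖h‖ ^ 2 := by
        rw [add_sub_cancel_left, norm_smul, Real.norm_of_nonneg ht.1.le]
        ring
    rw [(hgap t).deriv, ← inner_sub_left]
    linarith
  have hle : gap 1 ≤ gap 0 :=
    hanti (left_mem_Icc.2 zero_le_one) (right_mem_Icc.2 zero_le_one) zero_le_one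
  have hv : u + h = v := add_sub_cancel u v
  simp only [gap, one_smul, zero_smul, add_zero, hv] at hle
  linarith

/-- `v` is a step of the proximal gradient algorithm from `u`: a minimizer over the feasible set `C`
of the quadratic model of `f` at `u` with gradient `g u` and curvature `L`, plus the regularization
`α / 2 * ‖w‖ ^ 2`. -/
def IsProxGradStep (f : H → ℝ) (g : H → H) (α L : ℝ) (C : Set H) (u v : H) : Prop :=
  v ∈ C ∧ IsMinOn
    (fun w => f u + ⟪g u, w - u⟫_ℝ + L / 2 * ‖w - u‖ ^ 2 + α / 2 * ‖w‖ ^ 2) C v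

lemma IsProxGradStep.mul_norm_sub_sq_le {u v : H} (h : IsProxGradStep f g α L C u v) (hu : u ∈ C)
    (hf : ∀ u, HasFDerivAt f (innerSL ℝ (g u)) u) (hg : LipschitzWith K g) :
    (L - K) / 2 * ‖v - u‖ ^ 2 ≤ (f u + α / 2 * ‖u‖ ^ 2) - (f v + α / 2 * ‖v‖ ^ 2) := by
  have hmin : f u + ⟪g u, v - u⟫_ℝ + L / 2 * ‖v - u‖ ^ 2 + α / 2 * ‖v‖ ^ 2
      ≤ f u + α / 2 * ‖u‖ ^ 2 := by
    simpa using isMinOn_iff.1 h.2 u hu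
  have hdescent := le_add_inner_add_sq_of_lipschitzWith_gradient hf hg u v
  linarith

lemma summable_of_le_sub_succ {a b : ℕ → ℝ} (ha : ∀ k, 0 ≤ a k) (hb : BddBelow (range b))
    (hab : ∀ k, a k ≤ b k - b (k + 1)) : Summable a := by
  obtain ⟨m, hm⟩ := hb
  refine summable_of_sum_range_le (c := b 0 - m) ha fun n => ?_
  calc ∑ i ∈ Finset.range n, a i
      ≤ ∑ i ∈ Finset.range n, (b i - b (i + 1)) := Finset.sum_le_sum fun i _ => hab i
    _ = b 0 - b n := Finset.sum_range_sub' b n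
    _ ≤ b 0 - m := sub_le_sub_left (hm (mem_range_self n)) _

lemma summable_norm_sub_sq_of_isProxGradStep {u : ℕ → H} (hbdd : BddBelow (range f))
    (hf : ∀ u, HasFDerivAt f (innerSL ℝ (g u)) u) (hg : LipschitzWith K g)
    (hα : 0 ≤ α) (hL : K < L) (hu : ∀ k, IsProxGradStep f g α L C (u k) (u (k + 1))) :
    Summable fun k => ‖u (k + 1) - u k‖ ^ 2 := by
  have hgap : 0 < (L - K) / 2 := by linarith
  -- `u 0` need not be feasible, so the decrease only holds from `u 1` on.
  rw [← _root_.summable_nat_add_iff 1, ← summable_mul_left_iff hgap.ne']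
  refine summable_of_le_sub_succ (b := fun k => f (u (k + 1)) + α / 2 * ‖u (k + 1)‖ ^ 2)
    (fun k => by positivity) ?_ fun k => (hu (k + 1)).mul_norm_sub_sq_le (hu k).1 hf hg
  obtain ⟨m, hm⟩ := hbdd
  refine ⟨m, forall_mem_range.2 fun k => ?_⟩
  exact le_add_of_le_of_nonneg (hm (mem_range_self _)) (by positivity)

end ProximalGradient

section SetSequences

variable {X : Type*} {S : ℕ → Set X}

/-- The points whose membership in the sets `S i` changes at some step `i → i + 1` with `k ≤ i`.
Its measure controls how far all later sets, and their `limsup`, can differ from `S k`. -/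
def changesFrom (S : ℕ → Set X) (k : ℕ) : Set X := ⋃ i, S (i + k) ∆ S (i + k + 1)

lemma symmDiff_subset_changesFrom {k j : ℕ} (hkj : k ≤ j) : S k ∆ S j ⊆ changesFrom S k := by
  induction j, hkj using Nat.le_induction with
  | base => simp
  | succ j hkj ih =>
    have hstep : S j ∆ S (j + 1) ⊆ changesFrom S k := by
      simpa only [changesFrom, Nat.sub_add_cancel hkj] using
        subset_iUnion (fun i => S (i + k) ∆ S (i + k + 1)) (j - k)
    exact (symmDiff_triangle _ _ _).trans (union_subset ih hstep)

lemma symmDiff_limsup_subset_changesFrom (k : ℕ) : S k ∆ limsup S atTop ⊆ changesFrom S k := by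
  rintro x (⟨hk, hlim⟩ | ⟨hlim, hk⟩) <;> rw [mem_limsup_iff_frequently_mem] at hlim
  · obtain ⟨j, hj, hkj⟩ := ((not_frequently.1 hlim).and (eventually_ge_atTop k)).exists
    exact symmDiff_subset_changesFrom hkj (Or.inl ⟨hk, hj⟩)
  · obtain ⟨j, hj, hkj⟩ := (hlim.and_eventually (eventually_ge_atTop k)).exists
    exact symmDiff_subset_changesFrom hkj (Or.inr ⟨hj, hk⟩)

variable [MeasurableSpace X] {μ : Measure X}

lemma measurableSet_changesFrom (hS : ∀ k, MeasurableSet (S k)) (k : ℕ) :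
    MeasurableSet (changesFrom S k) :=
  .iUnion fun _ => (hS _).symmDiff (hS _)

lemma tendsto_measure_changesFrom {N : ℕ}
    (h : ∑' k, μ (S (k + N) ∆ S (k + N + 1)) ≠ ∞) :
    Tendsto (fun k => μ (changesFrom S k)) atTop (𝓝 0) := by
  rw [← tendsto_add_atTop_iff_nat N]
  refine tendsto_of_tendsto_of_tendsto_of_le_of_le tendsto_const_nhds
    (ENNReal.tendsto_sum_nat_add _ h) (fun _ => zero_le) fun k => ?_
  simpa only [changesFrom, add_assoc] using
    measure_iUnion_le (μ := μ) fun i => S (i + (k + N)) ∆ S (i + (k + N) + 1)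

end SetSequences

section Supports

variable {X E : Type*} [MeasurableSpace X] {μ : Measure X} [NormedAddCommGroup E] {p : ℝ≥0∞}

lemma rpow_mul_measure_symmDiff_support_le {v w : X → E} {s : ℝ≥0∞} (hp : p ≠ 0) (hp' : p ≠ ∞)
    (hvm : AEStronglyMeasurable v μ) (hwm : AEStronglyMeasurable w μ)
    (hv : ∀ᵐ x ∂μ, v x ≠ 0 → s ≤ ‖v x‖ₑ) (hw : ∀ᵐ x ∂μ, w x ≠ 0 → s ≤ ‖w x‖ₑ) :
    s ^ p.toReal * μ (support v ∆ support w) ≤ eLpNorm (w - v) p μ ^ p.toReal := by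
  have hsub : μ (support v ∆ support w) ≤ μ {x | s ≤ ‖(w - v) x‖ₑ} := by
    refine measure_mono_ae ?_
    filter_upwards [hv, hw] with x hvx hwx hx
    change s ≤ ‖w x - v x‖ₑ
    rcases hx with ⟨hne, hzero⟩ | ⟨hne, hzero⟩
    · simpa [notMem_support.1 hzero] using hvx hne
    · simpa [notMem_support.1 hzero] using hwx hne
  calc s ^ p.toReal * μ (support v ∆ support w)
      ≤ s ^ p.toReal * μ {x | s ≤ ‖(w - v) x‖ₑ} := by gcongr
    _ ≤ eLpNorm (w - v) p μ ^ p.toReal := mul_meas_ge_le_pow_eLpNorm' μ hp hp' (hwm.sub hvm) s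

lemma tsum_measure_symmDiff_support_ne_top [Fact (1 ≤ p)] {u : ℕ → Lp E p μ} {s : ℝ}
    (hp : p ≠ ∞) (hs : 0 < s) (hlow : ∀ k, ∀ᵐ x ∂μ, u k x ≠ 0 → s ≤ ‖u k x‖)
    (hsum : Summable fun k => ‖u (k + 1) - u k‖ ^ p.toReal) :
    ∑' k, μ (support (u k) ∆ support (u (k + 1))) ≠ ∞ := by
  have hp0 : p ≠ 0 := (zero_lt_one.trans_le Fact.out).ne'
  have hlow' (k : ℕ) : ∀ᵐ x ∂μ, u k x ≠ 0 → ENNReal.ofReal s ≤ ‖u k x‖ₑ := by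
    filter_upwards [hlow k] with x hx hne
    rw [← ofReal_norm]
    exact ENNReal.ofReal_le_ofReal (hx hne)
  have hcheb (k : ℕ) : ENNReal.ofReal s ^ p.toReal * μ (support (u k) ∆ support (u (k + 1)))
      ≤ ENNReal.ofReal (‖u (k + 1) - u k‖ ^ p.toReal) := by
    rw [← ENNReal.ofReal_rpow_of_nonneg (norm_nonneg _) ENNReal.toReal_nonneg, ofReal_norm,
      Lp.enorm_def, eLpNorm_congr_ae (Lp.coeFn_sub _ _)]
    exact rpow_mul_measure_symmDiff_support_le hp0 hp (Lp.aestronglyMeasurable _)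
      (Lp.aestronglyMeasurable _) (hlow' k) (hlow' (k + 1))
  have hmul : ENNReal.ofReal s ^ p.toReal * ∑' k, μ (support (u k) ∆ support (u (k + 1))) ≠ ∞ := by
    rw [← ENNReal.tsum_mul_left]
    exact ne_top_of_le_ne_top hsum.tsum_ofReal_ne_top (ENNReal.tsum_le_tsum hcheb)
  have hspos : ENNReal.ofReal s ^ p.toReal ≠ 0 :=
    (ENNReal.rpow_pos (ENNReal.ofReal_pos.2 hs) ENNReal.ofReal_ne_top).ne'
  exact fun htop => hmul (by rw [htop, ENNReal.mul_top hspos])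

lemma tendsto_measure_changesFrom_support [Fact (1 ≤ p)] {u : ℕ → Lp E p μ} {s : ℝ} (hp : p ≠ ∞)
    (hs : 0 < s) (hlow : ∀ᶠ k in atTop, ∀ᵐ x ∂μ, u k x ≠ 0 → s ≤ ‖u k x‖)
    (hsum : Summable fun k => ‖u (k + 1) - u k‖ ^ p.toReal) :
    Tendsto (fun k => μ (changesFrom (fun i => support (u i)) k)) atTop (𝓝 0) := by
  obtain ⟨N, hN⟩ := eventually_atTop.1 hlow
  refine tendsto_measure_changesFrom (N := N) ?_
  simpa only [add_right_comm _ 1 N] using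
    tsum_measure_symmDiff_support_ne_top (u := fun k => u (k + N)) hp hs
      (fun k => hN _ (Nat.le_add_left N k))
      (by simpa only [add_right_comm _ 1 N] using (_root_.summable_nat_add_iff N).2 hsum)

lemma measurableSet_support_Lp (v : Lp E p μ) : MeasurableSet (support v) :=
  (Lp.stronglyMeasurable v).measurableSet_support

lemma nontrivial_Lp [Nontrivial E] [IsFiniteMeasure μ] [NeZero μ] : Nontrivial (Lp E p μ) := by
  obtain ⟨c, hc⟩ := exists_ne (0 : E)
  refine ⟨Lp.const p μ c, 0, fun h => hc ?_⟩
  have hae : ∀ᵐ _ ∂μ, c = 0 := by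
    filter_upwards [Lp.coeFn_const (p := p) (μ := μ) c, Lp.coeFn_zero E p μ] with x hx hx0
    rw [h, hx0] at hx
    exact hx.symm
  obtain ⟨_, hc0⟩ := hae.exists
  exact hc0

variable [InnerProductSpace ℝ E]

lemma ae_eq_zero_of_notMem_of_tendsto_inner {ι : Type*} {l : Filter ι} [l.NeBot]
    {u : ι → Lp E 2 μ} {ubar : Lp E 2 μ} {B : Set X} (hB : MeasurableSet B)
    (hu : ∀ᶠ n in l, ∀ x ∉ B, u n x = 0)
    (hlim : ∀ φ : Lp E 2 μ, Tendsto (fun n => ⟪u n, φ⟫_ℝ) l (𝓝 ⟪ubar, φ⟫_ℝ)) :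
    ∀ᵐ x ∂μ, x ∉ B → ubar x = 0 := by
  -- Test weak convergence with the part `w` of `ubar` that lives off `B`.
  have hmem : MemLp (Bᶜ.indicator ubar) 2 μ := (Lp.memLp ubar).indicator hB.compl
  set w : Lp E 2 μ := hmem.toLp _
  have hw : w =ᵐ[μ] Bᶜ.indicator ubar := hmem.coeFn_toLp
  have hzero : ∀ᶠ n in l, ⟪u n, w⟫_ℝ = 0 := by
    filter_upwards [hu] with n hn
    rw [L2.inner_def]
    refine integral_eq_zero_of_ae ?_
    filter_upwards [hw] with x hx
    by_cases hxB : x ∈ B <;> simp [hx, hxB, hn]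
  have hself : ⟪ubar, w⟫_ℝ = ⟪w, w⟫_ℝ := by
    rw [L2.inner_def, L2.inner_def]
    refine integral_congr_ae ?_
    filter_upwards [hw] with x hx
    by_cases hxB : x ∈ B <;> simp [hx, hxB]
  have hw0 : w = 0 := by
    rw [← inner_self_eq_zero (𝕜 := ℝ), ← hself]
    exact tendsto_nhds_unique (hlim w)
      (tendsto_const_nhds.congr' (hzero.mono fun n hn => hn.symm))
  filter_upwards [hw, Lp.coeFn_zero E 2 μ] with x hx hx0 hxB
  rw [hw0, hx0, indicator_of_mem hxB] at hx
  exact hx.symm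

lemma measure_support_le_of_tendsto_inner {u : ℕ → Lp E 2 μ} {τ : ℝ≥0∞}
    (hτ : ∀ k, μ (support (u (k + 1))) ≤ τ)
    (hchg : Tendsto (fun k => μ (changesFrom (fun i => support (u i)) k)) atTop (𝓝 0))
    {ubar : Lp E 2 μ} {kn : ℕ → ℕ} (hkn : Tendsto kn atTop atTop)
    (hlim : ∀ φ : Lp E 2 μ, Tendsto (fun n => ⟪u (kn n), φ⟫_ℝ) atTop (𝓝 ⟪ubar, φ⟫_ℝ)) :
    μ (support ubar) ≤ τ := by
  set S : ℕ → Set X := fun k => support (u k)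
  have hS (k : ℕ) : MeasurableSet (S k) := measurableSet_support_Lp (u k)
  have hle (k : ℕ) : μ (support ubar) ≤ τ + μ (changesFrom S (k + 1)) := by
    have hvanish : ∀ᶠ n in atTop, ∀ x ∉ S (k + 1) ∪ changesFrom S (k + 1), u (kn n) x = 0 := by
      filter_upwards [hkn.eventually_ge_atTop (k + 1)] with n hn x hx
      by_contra hne
      exact hx (Or.inr (symmDiff_subset_changesFrom hn (Or.inr ⟨hne, fun hk => hx (Or.inl hk)⟩)))
    have hsupp := ae_eq_zero_of_notMem_of_tendsto_inner
      ((hS _).union (measurableSet_changesFrom hS _)) hvanish hlim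
    calc μ (support ubar)
        ≤ μ (S (k + 1) ∪ changesFrom S (k + 1)) :=
          measure_mono_ae (hsupp.mono fun x hx hne => by_contra fun hxB => hne (hx hxB))
      _ ≤ μ (S (k + 1)) + μ (changesFrom S (k + 1)) := measure_union_le _ _
      _ ≤ τ + μ (changesFrom S (k + 1)) := by gcongr; exact hτ k
  have hbound : Tendsto (fun k => τ + μ (changesFrom S (k + 1))) atTop (𝓝 τ) := by
    simpa using tendsto_const_nhds.add (hchg.comp (tendsto_add_atTop_nat 1))
  exact ge_of_tendsto' hbound hle

theorem statement14_general {f : Lp E 2 μ → ℝ} {g : Lp E 2 μ → Lp E 2 μ} {K : ℝ≥0} {α L : ℝ}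
    {τ : ℝ≥0∞} (hbdd : BddBelow (range f)) (hf : ∀ u, HasFDerivAt f (innerSL ℝ (g u)) u)
    (hg : LipschitzWith K g) (hα : 0 ≤ α) (hL : K < L) {u : ℕ → Lp E 2 μ}
    (hu : ∀ k, IsProxGradStep f g α L {v | μ (support v) ≤ τ} (u k) (u (k + 1)))
    {s : ℝ} (hs : 0 < s) (hlow : ∀ᶠ k in atTop, ∀ᵐ x ∂μ, u k x ≠ 0 → s ≤ ‖u k x‖) :
    (∃ A, MeasurableSet A ∧ Tendsto (fun k => μ (support (u k) ∆ A)) atTop (𝓝 0)) ∧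
    ∀ (ubar : Lp E 2 μ) (kn : ℕ → ℕ), Tendsto kn atTop atTop →
      (∀ φ : Lp E 2 μ, Tendsto (fun n => ⟪u (kn n), φ⟫_ℝ) atTop (𝓝 ⟪ubar, φ⟫_ℝ)) →
      μ (support ubar) ≤ τ := by
  have hsum := summable_norm_sub_sq_of_isProxGradStep hbdd hf hg hα hL hu
  have hchg := tendsto_measure_changesFrom_support (p := 2) (by simp) hs hlow (by simpa using hsum)
  refine ⟨⟨limsup (fun k => support (u k)) atTop, ?_, ?_⟩, fun ubar kn hkn hlim =>
    measure_support_le_of_tendsto_inner (fun k => (hu k).1) hchg hkn hlim⟩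
  · exact .measurableSet_limsup fun k => measurableSet_support_Lp (u k)
  · exact tendsto_of_tendsto_of_tendsto_of_le_of_le tendsto_const_nhds hchg (fun _ => zero_le)
      fun k => measure_mono (symmDiff_limsup_subset_changesFrom (S := fun i => support (u i)) k)

end Supports

section Multipliers

variable {X E : Type*} [MeasurableSpace X] {μ : Measure X} [NormedAddCommGroup E]

lemma exists_pos_eventually_le_norm_of_multiplier {v : ℕ → X → E} {lam : ℕ → ℝ} {β : ℝ} (hβ : 0 < β)
    (hbound : ∀ k, ∀ᵐ x ∂μ, v (k + 1) x ≠ 0 → √(2 * lam (k + 1) / β) ≤ ‖v (k + 1) x‖)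
    (hliminf : ∃ c : ℝ, 0 < c ∧ ∀ᶠ k in atTop, c ≤ lam k) :
    ∃ s : ℝ, 0 < s ∧ ∀ᶠ k in atTop, ∀ᵐ x ∂μ, v k x ≠ 0 → s ≤ ‖v k x‖ := by
  obtain ⟨c, hc, hlam⟩ := hliminf
  refine ⟨√(2 * c / β), by positivity, ?_⟩
  rw [← map_add_atTop_eq_nat 1, eventually_map] at hlam ⊢
  filter_upwards [hlam] with k hk
  filter_upwards [hbound k] with x hx hne
  exact le_trans (by gcongr) (hx hne)

end Multipliers

section L2Omega

variable {X : Type*} [MeasurableSpace X] {μ : Measure X}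

lemma integral_abs_zeroInd_sub_indicator {v : X → ℝ} {A : Set X} (hv : MeasurableSet (support v))
    (hA : MeasurableSet A) :
    ∫ x, |zeroInd (v x) - A.indicator 1 x| ∂μ = μ.real (support v ∆ A) := by
  rw [← integral_indicator_one (hv.symmDiff hA)]
  congr 1 with x
  by_cases hx : v x = 0 <;> by_cases hxA : x ∈ A <;>
    simp [zeroInd, indicator, mem_symmDiff, hx, hxA]

lemma integral_mul_eq_inner (v w : Lp ℝ 2 μ) : ∫ x, v x * w x ∂μ = ⟪v, w⟫_ℝ := by
  simp only [L2.inner_def, Real.inner_apply]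

variable {Ω : Set (Fin d → ℝ)} {f : Lp ℝ 2 (mOmega Ω) → ℝ}
  {gradf : Lp ℝ 2 (mOmega Ω) → Lp ℝ 2 (mOmega Ω)} {Lf α L τ : ℝ}

lemma SolvesSub.isProxGradStep {u v : Lp ℝ 2 (mOmega Ω)}
    (h : SolvesSub Ω f gradf α L τ u v) :
    IsProxGradStep f gradf α L {w | mOmega Ω (support w) ≤ ENNReal.ofReal τ} u v := by
  have hinner (w : Lp ℝ 2 (mOmega Ω)) :
      ⟪gradf u, w - u⟫_ℝ = ∫ x, gradf u x * (w x - u x) ∂mOmega Ω := by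
    rw [← integral_mul_eq_inner]
    refine integral_congr_ae ?_
    filter_upwards [Lp.coeFn_sub w u] with x hx
    rw [hx, Pi.sub_apply]
  refine ⟨h.1, isMinOn_iff.2 fun w hw => ?_⟩
  rw [hinner, hinner]
  exact h.2 w hw

lemma AssumptionB.lipschitzWith (hB : AssumptionB Ω f gradf Lf α) :
    LipschitzWith Lf.toNNReal gradf :=
  .of_dist_le' fun u v => by simpa only [dist_eq_norm] using hB.lipschitz u v

lemma AssumptionB.lipschitz_const_nonneg (hB : AssumptionB Ω f gradf Lf α)
    (h_pos : 0 < volume Ω) (h_fin : volume Ω < ⊤) : 0 ≤ Lf := by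
  have : IsFiniteMeasure (mOmega Ω) := ⟨by simpa [mOmega] using h_fin⟩
  have : NeZero (mOmega Ω) := ⟨by simpa [mOmega] using h_pos.ne'⟩
  have : Nontrivial (Lp ℝ 2 (mOmega Ω)) := nontrivial_Lp
  obtain ⟨v, w, hvw⟩ := exists_pair_ne (Lp ℝ 2 (mOmega Ω))
  exact nonneg_of_mul_nonneg_left ((norm_nonneg _).trans (hB.lipschitz v w))
    (norm_pos_iff.2 (sub_ne_zero.2 hvw))

end L2Omega

/-- under Assumption (B) with `L > L_f`, if `(u_k)` are iterates of the
proximal gradient algorithm with multipliers `λ_k ≥ 0` satisfying the complementarity and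
support lower bound conditions, and `liminf λ_k > 0`, then `χ_k = |u_k(·)|₀` converges in
`L¹(Ω)` to a characteristic function `χ̄`, and every weak sequential limit point `u̅` of
`(u_k)` in `L²(Ω)` satisfies `‖u̅‖₀ ≤ τ`. -/
theorem statement14 (Ω : Set (Fin d → ℝ)) (hΩ : MeasurableSet Ω)
    (h_pos : 0 < volume Ω) (h_fin : volume Ω < ⊤)
    (τ : ℝ) (hτ : 0 < τ) (hτ' : ENNReal.ofReal τ < volume Ω)
    (f : Lp ℝ 2 (mOmega Ω) → ℝ) (gradf : Lp ℝ 2 (mOmega Ω) → Lp ℝ 2 (mOmega Ω))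
    (Lf α : ℝ) (hB : AssumptionB Ω f gradf Lf α)
    (L : ℝ) (hL : Lf < L)
    (u : ℕ → Lp ℝ 2 (mOmega Ω))
    (h_alg : ∀ k : ℕ, SolvesSub Ω f gradf α L τ (u k) (u (k + 1)))
    (lam : ℕ → ℝ) (h_lam_nonneg : ∀ k, 0 ≤ lam k)
    (h_comp : ∀ k : ℕ, lam (k + 1) * ((mOmega Ω {x | u (k + 1) x ≠ 0}).toReal - τ) = 0)
    (h_bound : ∀ k : ℕ, ∀ᵐ x ∂mOmega Ω,
      u (k + 1) x ≠ 0 → Real.sqrt (2 * lam (k + 1) / (L + α)) ≤ |u (k + 1) x|)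
    (h_liminf : ∃ c : ℝ, 0 < c ∧ ∀ᶠ k in atTop, c ≤ lam k) :
    (∃ chibar : (Fin d → ℝ) → ℝ,
      (∀ᵐ x ∂mOmega Ω, chibar x = 0 ∨ chibar x = 1) ∧
      Tendsto (fun k => ∫ x, |zeroInd (u k x) - chibar x| ∂mOmega Ω) atTop (𝓝 0)) ∧
    ∀ (ubar : Lp ℝ 2 (mOmega Ω)) (kn : ℕ → ℕ), StrictMono kn →
      (∀ φ : Lp ℝ 2 (mOmega Ω),
        Tendsto (fun n => ∫ x, u (kn n) x * φ x ∂mOmega Ω) atTop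
          (𝓝 (∫ x, ubar x * φ x ∂mOmega Ω))) →
      mOmega Ω {x | ubar x ≠ 0} ≤ ENNReal.ofReal τ := by
  have hL0 : 0 < L := (hB.lipschitz_const_nonneg h_pos h_fin).trans_lt hL
  have hLα : 0 < L + α := add_pos_of_pos_of_nonneg hL0 hB.alpha_nonneg
  have hbdd : BddBelow (range f) := hB.bdd_below.imp fun c hc => forall_mem_range.2 hc
  obtain ⟨s, hs, hlow⟩ :=
    exists_pos_eventually_le_norm_of_multiplier (v := fun k => u k) hLα h_bound h_liminf
  obtain ⟨⟨A, hA, hlim⟩, hweak⟩ := statement14_general hbdd hB.deriv hB.lipschitzWith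
    hB.alpha_nonneg (by simp [hL, hL0]) (fun k => (h_alg k).isProxGradStep) hs hlow
  refine ⟨⟨A.indicator 1, ae_of_all _ fun x => indicator_eq_zero_or_self A 1 x, ?_⟩,
    fun ubar kn hkn hconv => hweak ubar kn hkn.tendsto_atTop ?_⟩
  · simpa [integral_abs_zeroInd_sub_indicator (measurableSet_support_Lp _) hA] using!
      (ENNReal.tendsto_toReal ENNReal.zero_ne_top).comp hlim
  · simpa only [integral_mul_eq_inner] using hconv
end
end

section
/- Assume (A). Let u̅ be a solution of problem (P). Then for every measurable set B ⊆ Ω with meas(B) ≤ τ, the function ṽ is integrable on B and ∫_B ṽ(x) dx ≥ ∫_Ω (g(x,u̅(x)) − g(x,0)) dx. -/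
open MeasureTheory Set Filter Topology ENNReal NNReal

noncomputable section

variable {d : ℕ}

/-!
The solution only enters through the lower bound it gives for all competitors supported in `B`.
The infima of a normal integrand over `[-N, N]` are measurable, since compactness lets them be
exchanged with increasing suprema; hence so is the smallest minimizer `u_N` over `[-N, N]`. The
gain `g(x,0) - g(x,u_N(x))` need not be integrable over `B`, so one cuts `u_N` down to subsets of
`B` where it is. On each of them the lower bound limits the gain by a constant independent of the
subset and of `N`. By σ-finiteness and monotone convergence the constant bounds the integral of
`-ṽ` over `B`.
-/

section CompactInfima

variable {X Y ι : Type*} [TopologicalSpace X] [CompleteLinearOrder Y] {K : Set X}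

theorem exists_mem_eq_biInf_of_isCompact (hK : IsCompact K) (hne : K.Nonempty) {f : X → Y}
    (hf : LowerSemicontinuousOn f K) : ∃ v ∈ K, f v = ⨅ w ∈ K, f w := by
  obtain ⟨v, hv, hmin⟩ := hf.exists_isMinOn hne hK
  exact ⟨v, hv, by rw [iInf_subtype', hmin.iInf_eq hv]⟩

theorem biInf_iSup_eq_iSup_biInf_of_isCompact [Preorder ι] [IsDirectedOrder ι] [Nonempty ι]
    (hK : IsCompact K) {f : ι → X → Y} (hmono : Monotone f)
    (hf : ∀ i, LowerSemicontinuous (f i)) :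
    ⨅ v ∈ K, ⨆ i, f i v = ⨆ i, ⨅ v ∈ K, f i v := by
  refine le_antisymm ?_ (iSup_le fun i => iInf₂_mono fun v _ => le_iSup (fun i => f i v) i)
  rcases K.eq_empty_or_nonempty with rfl | hne
  · simp
  by_contra! hlt
  have hcover : K ⊆ ⋃ i, f i ⁻¹' Ioi (⨆ i, ⨅ v ∈ K, f i v) := fun v hv =>
    mem_iUnion.2 (lt_iSup_iff.1 (hlt.trans_le (iInf₂_le v hv)))
  have hdir : Directed (· ⊆ ·) fun i => f i ⁻¹' Ioi (⨆ i, ⨅ v ∈ K, f i v) :=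
    Monotone.directed_le fun i j hij v hv => lt_of_lt_of_le hv (hmono hij v)
  obtain ⟨i, hi⟩ := hK.elim_directed_cover _ (fun i => (hf i).isOpen_preimage _) hcover hdir
  obtain ⟨v, hv, hvmin⟩ := exists_mem_eq_biInf_of_isCompact hK hne ((hf i).lowerSemicontinuousOn K)
  exact (hi hv).not_ge (hvmin ▸ le_iSup (fun i => ⨅ v ∈ K, f i v) i)

end CompactInfima

theorem iInf_eq_iInf_biInf_Icc {Y : Type*} [CompleteLattice Y] (f : ℝ → Y) :
    ⨅ v, f v = ⨅ N : ℕ, ⨅ v ∈ Icc (-N : ℝ) N, f v := by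
  refine le_antisymm (le_iInf fun N => le_iInf₂ fun v _ => iInf_le f v) (le_iInf fun v => ?_)
  obtain ⟨N, hN⟩ := exists_nat_ge |v|
  exact (iInf_le _ N).trans (iInf₂_le v (abs_le.1 hN))

theorem antitone_biInf_Icc {Y : Type*} [CompleteLattice Y] (f : ℝ → Y) :
    Antitone fun N : ℕ => ⨅ v ∈ Icc (-N : ℝ) N, f v := fun M N hMN =>
  biInf_mono fun _ hv => Icc_subset_Icc (by gcongr) (by gcongr) hv

theorem toENNReal_sub_iInf {ι : Type*} [Nonempty ι] {a : EReal} (htop : a ≠ ⊤) (hbot : a ≠ ⊥)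
    (m : ι → EReal) : (a - ⨅ i, m i).toENNReal = ⨆ i, (a - m i).toENNReal := by
  have hcont : Continuous fun y : EReal => (a - y).toENNReal := by
    refine EReal.continuous_toENNReal.comp (continuous_iff_continuousAt.2 fun y => ?_)
    exact (EReal.continuousAt_add (p := (a, -y)) (.inl htop) (.inl hbot)).comp
      (f := fun y : EReal => (a, -y)) (by fun_prop)
  refine Antitone.map_ciInf_of_continuousAt (f := fun y : EReal => (a - y).toENNReal)
    hcont.continuousAt fun y z hyz => ?_
  exact EReal.toENNReal_le_toENNReal (EReal.sub_le_sub le_rfl hyz)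

section Measure

variable {α : Type*} [MeasurableSpace α] {μ : Measure α}

theorem measurable_biInf_of_continuous {X Y : Type*} [TopologicalSpace X]
    [SecondCountableTopology X] [CompleteLinearOrder Y] [TopologicalSpace Y] [OrderTopology Y]
    [SecondCountableTopology Y] [MeasurableSpace Y] [BorelSpace Y] {f : α → X → Y}
    (hmeas : ∀ v, Measurable fun x => f x v) (hcont : ∀ x, Continuous (f x)) (K : Set X) :
    Measurable fun x => ⨅ v ∈ K, f x v := by
  obtain ⟨S, hScount, hSdense⟩ := TopologicalSpace.exists_countable_dense K
  have : Countable S := hScount.to_subtype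
  have hdense (x : α) : ⨅ v ∈ K, f x v = ⨅ v : S, f x v := by
    rw [iInf_subtype']
    exact (hSdense.ciInf' (f := fun v : K => f x v)
      ((hcont x).comp continuous_subtype_val)).symm
  simp only [hdense]
  exact Measurable.iInf fun v => hmeas v

theorem lintegral_le_of_forall_setLIntegral_le [SigmaFinite μ] {f : α → ℝ≥0∞}
    (hf : ∀ᵐ x ∂μ, f x ≠ ∞) {C : ℝ≥0∞}
    (h : ∀ s, MeasurableSet s → ∫⁻ x in s, f x ∂μ ≠ ∞ → ∫⁻ x in s, f x ∂μ ≤ C) :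
    ∫⁻ x, f x ∂μ ≤ C := by
  have : SigmaFinite (μ.withDensity f) := SigmaFinite.withDensity_of_ne_top hf
  rw [← setLIntegral_univ, ← withDensity_apply f .univ, ← Measure.iSup_restrict_spanningSets]
  refine iSup_le fun k => ?_
  have hk := measurableSet_spanningSets (μ.withDensity f) k
  have hfin := measure_spanningSets_lt_top (μ.withDensity f) k
  rw [Measure.restrict_apply_univ]
  rw [withDensity_apply f hk] at hfin ⊢
  exact h _ hk hfin.ne

/-- Integrability of an extended-real-valued function which is a.e. finite; this is `IntegrableE`
over an arbitrary measure space. -/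
def ERealIntegrable (μ : Measure α) (f : α → EReal) : Prop :=
  (∀ᵐ x ∂μ, f x ≠ ⊤ ∧ f x ≠ ⊥) ∧ Integrable (fun x => (f x).toReal) μ

theorem ERealIntegrable.aemeasurable {f : α → EReal} (hf : ERealIntegrable μ f) :
    AEMeasurable f μ := by
  refine hf.2.aemeasurable.coe_real_ereal.congr ?_
  filter_upwards [hf.1] with x hx using EReal.coe_toReal hx.1 hx.2

theorem aemeasurable_toENNReal_sub {f g : α → EReal} (hf : AEMeasurable f μ)
    (hg : AEMeasurable g μ) : AEMeasurable (fun x => (f x - g x).toENNReal) μ := by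
  simp only [sub_eq_add_neg]
  exact (hf.add hg.neg).ereal_toENNReal

theorem ERealIntegrable.integral_eq_sub_of_le {f₀ f : α → EReal} (hf₀ : ERealIntegrable μ f₀)
    (hf : AEMeasurable f μ) (hle : f ≤ᵐ[μ] f₀)
    (hfin : ∫⁻ x, (f₀ x - f x).toENNReal ∂μ ≠ ∞) :
    ERealIntegrable μ f ∧
      ∫ x, (f x).toReal ∂μ =
        ∫ x, (f₀ x).toReal ∂μ - (∫⁻ x, (f₀ x - f x).toENNReal ∂μ).toReal := by
  have hmeas := aemeasurable_toENNReal_sub hf₀.aemeasurable hf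
  have hgap : ∀ᵐ x ∂μ, (f₀ x - f x).toENNReal < ∞ := ae_lt_top' hmeas hfin
  have hfinite : ∀ᵐ x ∂μ, f x ≠ ⊤ ∧ f x ≠ ⊥ := by
    filter_upwards [hf₀.1, hle, hgap] with x h₀ hx hlt
    refine ⟨ne_top_of_le_ne_top h₀.1 hx, fun hbot => ?_⟩
    simp [hbot, EReal.sub_bot h₀.2] at hlt
  have hsub : (fun x => (f x).toReal) =ᵐ[μ]
      fun x => (f₀ x).toReal - (f₀ x - f x).toENNReal.toReal := by
    filter_upwards [hf₀.1, hfinite, hle] with x h₀ hx hxle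
    rw [EReal.toReal_toENNReal ((EReal.sub_nonneg (.inl h₀.1) (.inl h₀.2)).2 hxle),
      EReal.toReal_sub h₀.1 h₀.2 hx.1 hx.2, _root_.sub_sub_cancel]
  have hint := integrable_toReal_of_lintegral_ne_top hmeas hfin
  refine ⟨⟨hfinite, (hf₀.2.sub hint).congr hsub.symm⟩, ?_⟩
  rw [integral_congr_ae hsub, integral_sub hf₀.2 hint, integral_toReal hmeas hgap]

theorem ERealIntegrable.integral_piecewise_of_le {f₀ f : α → EReal} (hf₀ : ERealIntegrable μ f₀)
    (hf : AEMeasurable f μ) (hle : f ≤ᵐ[μ] f₀) {E : Set α} [DecidablePred (· ∈ E)]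
    (hE : MeasurableSet E) (hfin : ∫⁻ x in E, (f₀ x - f x).toENNReal ∂μ ≠ ∞) :
    ERealIntegrable μ (E.piecewise f f₀) ∧
      ∫ x, (E.piecewise f f₀ x).toReal ∂μ =
        ∫ x, (f₀ x).toReal ∂μ - (∫⁻ x in E, (f₀ x - f x).toENNReal ∂μ).toReal := by
  have hgap : (fun x => (f₀ x - E.piecewise f f₀ x).toENNReal) =ᵐ[μ]
      E.indicator fun x => (f₀ x - f x).toENNReal := by
    filter_upwards [hf₀.1] with x h₀
    by_cases hx : x ∈ E <;> simp [hx, EReal.sub_self h₀.1 h₀.2]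
  rw [← lintegral_indicator hE, ← lintegral_congr_ae hgap] at hfin ⊢
  have hmeas : AEMeasurable (E.piecewise f f₀) μ := by
    rw [← indicator_add_compl_eq_piecewise]
    exact (hf.indicator hE).add (hf₀.aemeasurable.indicator hE.compl)
  refine hf₀.integral_eq_sub_of_le hmeas ?_ hfin
  filter_upwards [hle] with x hx
  by_cases hxE : x ∈ E <;> simp [hxE, hx]

theorem lintegral_toENNReal_sub_iInf {a : α → EReal} (ha : AEMeasurable a μ)
    (hfinite : ∀ᵐ x ∂μ, a x ≠ ⊤ ∧ a x ≠ ⊥) {m : ℕ → α → EReal}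
    (hm : ∀ n, AEMeasurable (m n) μ) (hanti : ∀ x, Antitone fun n => m n x) :
    ∫⁻ x, (a x - ⨅ n, m n x).toENNReal ∂μ = ⨆ n, ∫⁻ x, (a x - m n x).toENNReal ∂μ := by
  rw [← lintegral_iSup' (fun n => aemeasurable_toENNReal_sub ha (hm n))]
  · refine lintegral_congr_ae ?_
    filter_upwards [hfinite] with x hx using toENNReal_sub_iInf hx.1 hx.2 _
  · exact .of_forall fun x i j hij =>
      EReal.toENNReal_le_toENNReal (EReal.sub_le_sub le_rfl (hanti x hij))

/-- A form of normality without exceptional points: every slice is lower semicontinuous, and the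
infima over compact intervals, which govern the measurability of minimizers, are measurable. -/
structure LscIntegrand (h : α → ℝ → EReal) : Prop where
  lowerSemicontinuous (x : α) : LowerSemicontinuous (h x)
  measurable_biInf_Icc (a b : ℝ) : Measurable fun x => ⨅ v ∈ Icc a b, h x v

theorem lscIntegrand_iSup {f : ℕ → α → ℝ → EReal} (hmeas : ∀ n v, Measurable fun x => f n x v)
    (hcont : ∀ n x, Continuous (f n x)) : LscIntegrand fun x v => ⨆ n, f n x v where
  lowerSemicontinuous x := lowerSemicontinuous_iSup fun n => (hcont n x).lowerSemicontinuous
  measurable_biInf_Icc a b := by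
    have hcont' (n : ℕ) (x : α) : Continuous (partialSups (fun k => f k x) n) :=
      Continuous.partialSups fun k _ => hcont k x
    have hmeas' (n : ℕ) (v : ℝ) : Measurable fun x => partialSups (fun k => f k x) n v := by
      simp only [Pi.partialSups_apply, partialSups_eq_biSup]
      exact Measurable.iSup fun k => Measurable.iSup fun _ => hmeas k v
    have hswap (x : α) : ⨅ v ∈ Icc a b, ⨆ n, f n x v =
        ⨆ n, ⨅ v ∈ Icc a b, partialSups (fun k => f k x) n v := by
      rw [← biInf_iSup_eq_iSup_biInf_of_isCompact isCompact_Icc (partialSups _).monotone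
        fun n => (hcont' n x).lowerSemicontinuous]
      simp only [Pi.partialSups_apply, iSup_partialSups_eq]
    simp only [hswap]
    exact Measurable.iSup fun n => measurable_biInf_of_continuous (hmeas' n) (hcont' n) _

theorem LscIntegrand.exists_measurable_argmin {h : α → ℝ → EReal} (hh : LscIntegrand h) {a b : ℝ}
    (hab : a ≤ b) : ∃ u : α → ℝ, Measurable u ∧
      ∀ x, u x ∈ Icc a b ∧ h x (u x) = ⨅ v ∈ Icc a b, h x v := by
  let argmin (x : α) : Set ℝ := Icc a b ∩ h x ⁻¹' Iic (⨅ v ∈ Icc a b, h x v)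
  have hattained {c : ℝ} (hac : a ≤ c) (x : α) : ∃ v ∈ Icc a c, h x v = ⨅ w ∈ Icc a c, h x w :=
    exists_mem_eq_biInf_of_isCompact isCompact_Icc (nonempty_Icc.2 hac)
      ((hh.lowerSemicontinuous x).lowerSemicontinuousOn _)
  have hbdd (x : α) : BddBelow (argmin x) := bddBelow_Icc.mono inter_subset_left
  have hmem (x : α) : sInf (argmin x) ∈ argmin x := by
    obtain ⟨v, hv, hmin⟩ := hattained hab x
    exact (isClosed_Icc.inter ((hh.lowerSemicontinuous x).isClosed_preimage _)).csInf_mem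
      ⟨v, hv, hmin.le⟩ (hbdd x)
  -- the smallest minimizer is at most `c` iff restricting to `v ≤ c` does not raise the minimum
  have hle_iff {c : ℝ} (hac : a ≤ c) (x : α) : sInf (argmin x) ≤ c ↔
      ⨅ v ∈ Icc a (min c b), h x v ≤ ⨅ v ∈ Icc a b, h x v := by
    constructor
    · intro hc
      exact (iInf₂_le _ ⟨(hmem x).1.1, le_min hc (hmem x).1.2⟩).trans (hmem x).2
    · intro hle
      obtain ⟨v, ⟨hav, hvc⟩, hmin⟩ := hattained (le_min hac hab) x
      exact (csInf_le (hbdd x) ⟨⟨hav, hvc.trans (min_le_right _ _)⟩, hmin.le.trans hle⟩).trans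
        (hvc.trans (min_le_left _ _))
  refine ⟨fun x => sInf (argmin x), measurable_of_Iic fun c => ?_,
    fun x => ⟨(hmem x).1, (hmem x).2.antisymm (iInf₂_le _ (hmem x).1)⟩⟩
  rcases le_or_gt a c with hac | hca
  · rw [show (fun x => sInf (argmin x)) ⁻¹' Iic c =
      {x | ⨅ v ∈ Icc a (min c b), h x v ≤ ⨅ v ∈ Icc a b, h x v} from ext (hle_iff hac)]
    exact measurableSet_le (hh.measurable_biInf_Icc a (min c b)) (hh.measurable_biInf_Icc a b)
  · convert MeasurableSet.empty
    exact eq_empty_of_forall_notMem fun x hx => hca.not_ge ((hmem x).1.1.trans hx)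

/-- `NormalIntegrand` over an arbitrary measure space: a.e. the supremum of countably many
Carathéodory functions. -/
def IsNormalIntegrand (μ : Measure α) (g : α → ℝ → EReal) : Prop :=
  ∃ gn : ℕ → α → ℝ → ℝ,
    (∀ n, (∀ v, Measurable fun x => gn n x v) ∧ ∀ᵐ x ∂μ, Continuous (gn n x)) ∧
      ∀ᵐ x ∂μ, ∀ v, g x v = ⨆ n, (gn n x v : EReal)

namespace IsNormalIntegrand

variable {g : α → ℝ → EReal}

theorem ae_ne_bot (hg : IsNormalIntegrand μ g) : ∀ᵐ x ∂μ, ∀ v, g x v ≠ ⊥ := by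
  obtain ⟨gn, -, hsup⟩ := hg
  filter_upwards [hsup] with x hx v
  rw [hx v]
  exact ne_bot_of_le_ne_bot (EReal.coe_ne_bot _) (le_iSup (fun n => (gn n x v : EReal)) 0)

theorem exists_ae_eq_lscIntegrand (hg : IsNormalIntegrand μ g) :
    ∃ h, LscIntegrand h ∧ ∀ᵐ x ∂μ, g x = h x := by
  classical
  obtain ⟨gn, hcar, hsup⟩ := hg
  obtain ⟨S, hS, hSmeas, hScont⟩ :=
    (ae_all_iff.2 fun n => (hcar n).2).exists_measurable_mem
  refine ⟨fun x v => ⨆ n, if x ∈ S then (gn n x v : EReal) else 0, lscIntegrand_iSup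
    (fun n v => .ite hSmeas ((hcar n).1 v).coe_real_ereal measurable_const) fun n x => ?_, ?_⟩
  · by_cases hx : x ∈ S
    · simpa only [hx, if_true] using! continuous_coe_real_ereal.comp (hScont x hx n)
    · simpa only [hx, if_false] using continuous_const
  · filter_upwards [hS, hsup] with x hx hgx
    ext v
    simp only [hgx v, hx, if_true]

theorem aemeasurable_biInf_Icc (hg : IsNormalIntegrand μ g) (a b : ℝ) :
    AEMeasurable (fun x => ⨅ v ∈ Icc a b, g x v) μ := by
  obtain ⟨h, hh, hgh⟩ := hg.exists_ae_eq_lscIntegrand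
  refine (hh.measurable_biInf_Icc a b).aemeasurable.congr ?_
  filter_upwards [hgh] with x hx
  rw [hx]

theorem aemeasurable_iInf (hg : IsNormalIntegrand μ g) :
    AEMeasurable (fun x => ⨅ v, g x v) μ := by
  simp only [fun x => iInf_eq_iInf_biInf_Icc (g x)]
  exact AEMeasurable.iInf fun N => hg.aemeasurable_biInf_Icc _ _

theorem exists_measurable_argmin (hg : IsNormalIntegrand μ g) {a b : ℝ} (hab : a ≤ b) :
    ∃ u : α → ℝ, Measurable u ∧ ∀ᵐ x ∂μ, g x (u x) = ⨅ v ∈ Icc a b, g x v := by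
  obtain ⟨h, hh, hgh⟩ := hg.exists_ae_eq_lscIntegrand
  obtain ⟨u, hu, hmin⟩ := hh.exists_measurable_argmin hab
  refine ⟨u, hu, ?_⟩
  filter_upwards [hgh] with x hx
  rw [hx, (hmin x).2]

end IsNormalIntegrand

theorem setLIntegral_sub_comp_le {g : α → ℝ → EReal} {B : Set α} [SigmaFinite (μ.restrict B)]
    (hg₀ : ERealIntegrable μ fun x => g x 0) (hB : MeasurableSet B) {c : ℝ}
    (hc : ∀ u : α → ℝ, Measurable u → (∀ x ∉ B, u x = 0) →
      ERealIntegrable μ (fun x => g x (u x)) → c ≤ ∫ x, (g x (u x)).toReal ∂μ)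
    {u : α → ℝ} (hu : Measurable u) (hgu : AEMeasurable (fun x => g x (u x)) μ)
    (hbot : ∀ᵐ x ∂μ, g x (u x) ≠ ⊥) (hle : ∀ᵐ x ∂μ, g x (u x) ≤ g x 0) :
    ∫⁻ x in B, (g x 0 - g x (u x)).toENNReal ∂μ ≤
      ENNReal.ofReal (∫ x, (g x 0).toReal ∂μ - c) := by
  classical
  have hgap : ∀ᵐ x ∂μ, (g x 0 - g x (u x)).toENNReal ≠ ∞ := by
    filter_upwards [hbot, hg₀.1] with x hx h₀
    rw [EReal.toENNReal_ne_top_iff, sub_eq_add_neg]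
    exact (EReal.add_lt_top h₀.1 (by simpa using hx)).ne
  refine lintegral_le_of_forall_setLIntegral_le (ae_restrict_of_ae hgap) fun s hs hfin => ?_
  rw [Measure.restrict_restrict hs] at hfin ⊢
  have hsB : MeasurableSet (s ∩ B) := hs.inter hB
  have hcomp : (s ∩ B).piecewise (fun x => g x (u x)) (fun x => g x 0) =
      fun x => g x ((s ∩ B).indicator u x) := by
    ext x
    by_cases hx : x ∈ s ∩ B <;> simp only [hx, piecewise, indicator, if_true, if_false]
  obtain ⟨hint, hval⟩ := hg₀.integral_piecewise_of_le hgu hle hsB hfin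
  rw [hcomp] at hint hval
  have hbound := hc _ (hu.indicator hsB)
    (fun x hx => indicator_of_notMem (fun hxs => hx hxs.2) u) hint
  rw [← ENNReal.ofReal_toReal hfin]
  exact ENNReal.ofReal_le_ofReal (by linarith)

theorem IsNormalIntegrand.setLIntegral_sub_iInf_le {g : α → ℝ → EReal} {B : Set α}
    [SigmaFinite (μ.restrict B)] (hg : IsNormalIntegrand μ g)
    (hg₀ : ERealIntegrable μ fun x => g x 0) (hB : MeasurableSet B) {c : ℝ}
    (hc : ∀ u : α → ℝ, Measurable u → (∀ x ∉ B, u x = 0) →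
      ERealIntegrable μ (fun x => g x (u x)) → c ≤ ∫ x, (g x (u x)).toReal ∂μ) :
    ∫⁻ x in B, (g x 0 - ⨅ v, g x v).toENNReal ∂μ ≤
      ENNReal.ofReal (∫ x, (g x 0).toReal ∂μ - c) := by
  simp only [fun x => iInf_eq_iInf_biInf_Icc (g x)]
  rw [lintegral_toENNReal_sub_iInf hg₀.aemeasurable.restrict (ae_restrict_of_ae hg₀.1)
    (fun N => (hg.aemeasurable_biInf_Icc _ _).restrict) fun x => antitone_biInf_Icc (g x)]
  refine iSup_le fun N => ?_
  have hN : (0 : ℝ) ∈ Icc (-N : ℝ) N := by simp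
  obtain ⟨u, hu, hmin⟩ := hg.exists_measurable_argmin (hN.1.trans hN.2)
  have hgu : AEMeasurable (fun x => g x (u x)) μ :=
    (hg.aemeasurable_biInf_Icc _ _).congr (hmin.mono fun x hx => hx.symm)
  have hle : ∀ᵐ x ∂μ, g x (u x) ≤ g x 0 := hmin.mono fun x hx => hx.trans_le (iInf₂_le 0 hN)
  refine le_of_eq_of_le (lintegral_congr_ae ?_) (setLIntegral_sub_comp_le hg₀ hB hc hu hgu
    (hg.ae_ne_bot.mono fun x hx => hx (u x)) hle)
  filter_upwards [ae_restrict_of_ae hmin] with x hx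
  rw [hx]

theorem statement17_general {g : α → ℝ → EReal} {B : Set α} [SigmaFinite (μ.restrict B)]
    (hg : IsNormalIntegrand μ g) (hg₀ : ERealIntegrable μ fun x => g x 0)
    (hB : MeasurableSet B) {c : ℝ}
    (hc : ∀ u : α → ℝ, Measurable u → (∀ x ∉ B, u x = 0) →
      ERealIntegrable μ (fun x => g x (u x)) → c ≤ ∫ x, (g x (u x)).toReal ∂μ) :
    ERealIntegrable (μ.restrict B) (fun x => (⨅ v, g x v) - g x 0) ∧
      c - ∫ x, (g x 0).toReal ∂μ ≤ ∫ x in B, ((⨅ v, g x v) - g x 0).toReal ∂μ := by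
  have hgap := hg.setLIntegral_sub_iInf_le hg₀ hB hc
  have hneg : ∫⁻ x in B, (0 - ((⨅ v, g x v) - g x 0)).toENNReal ∂μ =
      ∫⁻ x in B, (g x 0 - ⨅ v, g x v).toENNReal ∂μ := by
    refine lintegral_congr_ae ?_
    filter_upwards [ae_restrict_of_ae hg₀.1] with x h₀
    rw [zero_sub, EReal.neg_sub (.inr h₀.2) (.inr h₀.1), add_comm, sub_eq_add_neg]
  have hmeas : AEMeasurable (fun x => (⨅ v, g x v) - g x 0) (μ.restrict B) := by
    simp only [sub_eq_add_neg]
    exact (hg.aemeasurable_iInf.add hg₀.aemeasurable.neg).restrict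
  have hzero : ERealIntegrable (μ.restrict B) fun _ => 0 := by simp [ERealIntegrable]
  obtain ⟨hint, hval⟩ := hzero.integral_eq_sub_of_le hmeas
    (.of_forall fun x => EReal.sub_nonpos.2 (iInf_le _ 0))
    (hneg ▸ ne_top_of_le_ne_top ENNReal.ofReal_ne_top hgap)
  have hc₀ : c ≤ ∫ x, (g x 0).toReal ∂μ := hc 0 measurable_zero (fun _ _ => rfl) hg₀
  have hbound := ENNReal.toReal_le_of_le_ofReal (sub_nonneg.2 hc₀) hgap
  refine ⟨hint, ?_⟩
  simp only [hval, hneg, EReal.toReal_zero, integral_zero]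
  linarith

end Measure

instance sigmaFinite_mOmega (Ω : Set (Fin d → ℝ)) : SigmaFinite (mOmega Ω) :=
  inferInstanceAs (SigmaFinite (volume.restrict Ω))

/-- under Assumption (A), if `u̅` solves (P), then for every measurable
`B ⊆ Ω` with `meas B ≤ τ`, the function `ṽ` is integrable on `B` and
`∫_B ṽ dx ≥ ∫_Ω (g(x,u̅(x)) − g(x,0)) dx`. -/
theorem statement17 (Ω : Set (Fin d → ℝ)) (g : (Fin d → ℝ) → ℝ → EReal) (τ : ℝ)
    (hA : AssumptionA Ω g τ)
    (ubar : (Fin d → ℝ) → ℝ) (h_sol : SolvesP Ω g τ ubar) :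
    ∀ B : Set (Fin d → ℝ), MeasurableSet B → B ⊆ Ω → volume B ≤ ENNReal.ofReal τ →
      IntegrableE ((mOmega Ω).restrict B) (tildeV g) ∧
      intE (mOmega Ω) (fun x => g x (ubar x)) - intE (mOmega Ω) (fun x => g x 0) ≤
        intE ((mOmega Ω).restrict B) (tildeV g) :=
  fun _ hB _ hBτ => statement17_general hA.normal hA.int_g0 hB fun u hu hu₀ hint =>
    h_sol.2 u ⟨hu, hint, (measure_mono fun x hx => not_imp_comm.1 (hu₀ x) hx.2).trans hBτ⟩
end
end
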